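/- arXiv:2012.12022 — 7 statements merged into one kernel-verified Lean document; each statement's English description precedes it below -/
import Mathlib

section
/- For every n ≥ 1 there exist constants C₁, C₂ > 0 depending only on n such that for all t > 0 and all weakly decreasing x, y ∈ ℝⁿ one has C₁·E ≤ e^{−(|x|²+|y|²)/(4t)}·(∑_{σ∈Sₙ} sgn(σ)·exp((1/(2t))·∑_{k=1}^n x_{σ(k)} y_k))·∏_{1≤i<j≤n}(t+(x_i−x_j)(y_i−y_j)) ≤ C₂·E, where now E = (∏_{1≤i<j≤n} sinh(x_i−x_j)·sinh(y_i−y_j))·e^{−ρ(x)−ρ(y)}·e^{−|x−y|²/(4t)}·∏_{1≤i<j≤n}(1+x_i−x_j)(1+y_i−y_j) and ρ(x) = ∑_{1≤i<j≤n}(x_i−x_j). (This is the sharp estimate of the radial heat kernel of the curved complex symmetric space of type A_{n−1}: p̃_t^W(x,y) ≍ e^{−|ρ|²t}·t^{−n/2}·e^{−ρ(x)−ρ(y)}·e^{−|x−y|²/(4t)}·∏_{i<j}(1+x_i−x_j)(1+y_i−y_j)/(t+(x_i−x_j)(y_i−y_j)).) -/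
open Finset

/-- `ρ(x) = ∑_{1 ≤ i < j ≤ n} (x_i − x_j)`. -/
def rhoSum {n : ℕ} (x : Fin n → ℝ) : ℝ :=
  ∑ i : Fin n, ∑ j ∈ Finset.Ioi i, (x i - x j)

/-!
Subtracting consecutive rows of the matrix `exp (aᵢ bⱼ)` writes its determinant as a product of
gaps `bⱼ - bₙ₊₁` times the integral of the determinant of one size less over the sequences `s`
interlacing `a`, with `b` replaced by `cⱼ = bⱼ - bₙ₊₁`. By induction the integrand is comparable to
`exp (∑ sᵢ cᵢ)` times a product over pairs of gaps of `c` and truncated gaps of `s`. The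
exponential concentrates the integral near the upper endpoints, `sᵢ ∈ [aᵢ - mᵢ, aᵢ]`, where
`mᵢ` is the smaller of `aᵢ - aᵢ₊₁` and `1 / cᵢ`; this evaluates the integral up to constants as a
product involving the widths `mᵢ`. Exchanging one factor at a time, this product telescopes to the
truncated gaps of `a`. The alternating sum of the heat kernel is such a determinant, and
`sinh u * exp (-u) * (1 + u)` is comparable to `u`.
-/

open Asymptotics Filter MeasureTheory

theorem isTheta_of_le_mul_of_le_mul {α : Type*} {l : Filter α} {f g : α → ℝ} (c₁ c₂ : ℝ)
    (h : ∀ᶠ p in l, 0 ≤ f p ∧ 0 ≤ g p ∧ f p ≤ c₁ * g p ∧ g p ≤ c₂ * f p) : f =Θ[l] g := by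
  constructor
  · refine .of_bound c₁ (h.mono fun p ⟨hf, hg, hfg, _⟩ => ?_)
    rwa [Real.norm_of_nonneg hf, Real.norm_of_nonneg hg]
  · refine .of_bound c₂ (h.mono fun p ⟨hf, hg, _, hgf⟩ => ?_)
    rwa [Real.norm_of_nonneg hf, Real.norm_of_nonneg hg]

theorem exists_forall_le_and_le_of_isTheta_principal {α : Type*} {s : Set α} {f g : α → ℝ}
    (hf : ∀ p ∈ s, 0 ≤ f p) (hg : ∀ p ∈ s, 0 ≤ g p) (h : f =Θ[𝓟 s] g) :
    ∃ C₁ C₂ : ℝ, 0 < C₁ ∧ 0 < C₂ ∧ ∀ p ∈ s, C₁ * g p ≤ f p ∧ f p ≤ C₂ * g p := by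
  obtain ⟨C, hC, hfg⟩ := h.isBigO.exists_pos
  obtain ⟨D, hD, hgf⟩ := h.symm.isBigO.exists_pos
  rw [isBigOWith_principal] at hfg hgf
  refine ⟨D⁻¹, C, inv_pos.2 hD, hC, fun p hp => ⟨(inv_mul_le_iff₀ hD).2 ?_, ?_⟩⟩
  · simpa only [Real.norm_of_nonneg (hf p hp), Real.norm_of_nonneg (hg p hp)] using hgf p hp
  · simpa only [Real.norm_of_nonneg (hf p hp), Real.norm_of_nonneg (hg p hp)] using hfg p hp

theorem isTheta_mul_prod_of_telescoping {α : Type*} {l : Filter α} {n : ℕ}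
    {G : Fin (n + 1) → α → ℝ} {X T : Fin n → α → ℝ}
    (h : ∀ j, (fun p => G j.castSucc p * X j p) =Θ[l] fun p => T j p * G j.succ p) :
    (fun p => G 0 p * ∏ j, X j p) =Θ[l] fun p => (∏ j, T j p) * G (Fin.last n) p := by
  induction n with
  | zero => simpa using isTheta_refl _ l
  | succ n ih =>
    have hinit : (fun p => G 0 p * ∏ j : Fin n, X j.castSucc p) =Θ[l]
        fun p => (∏ j : Fin n, T j.castSucc p) * G (Fin.last n).castSucc p :=
      ih (G := fun j => G j.castSucc) (X := fun j => X j.castSucc) (T := fun j => T j.castSucc)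
        fun j => h j.castSucc
    have hlast : (fun p => (∏ j : Fin n, T j.castSucc p) * G (Fin.last n).castSucc p *
        X (Fin.last n) p) =Θ[l]
        fun p => (∏ j : Fin n, T j.castSucc p) * (T (Fin.last n) p * G (Fin.last (n + 1)) p) := by
      simpa only [mul_assoc, Fin.succ_last] using (isTheta_refl _ l).mul (h (Fin.last n))
    simpa only [Fin.prod_univ_castSucc, mul_assoc] using
      (hinit.mul (isTheta_refl (X (Fin.last n)) l)).trans hlast

theorem isBigO_setIntegral {α β E : Type*} [MeasurableSpace β] {μ : Measure β}
    [NormedAddCommGroup E] [NormedSpace ℝ E] {l : Filter α} {S : α → Set β} {f : α → β → E}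
    {g : α → β → ℝ} (hS : ∀ᶠ p in l, MeasurableSet (S p)) (hg : ∀ᶠ p in l, ∀ s ∈ S p, 0 ≤ g p s)
    (hint : ∀ᶠ p in l, IntegrableOn (g p) (S p) μ)
    (h : (fun q : α × β => f q.1 q.2) =O[l.comap Prod.fst ⊓ 𝓟 {q | q.2 ∈ S q.1}]
      fun q => g q.1 q.2) :
    (fun p => ∫ s in S p, f p s ∂μ) =O[l] fun p => ∫ s in S p, g p s ∂μ := by
  obtain ⟨C, hC⟩ := h.bound
  rw [eventually_inf_principal, eventually_comap] at hC
  refine .of_bound C ?_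
  filter_upwards [hS, hg, hint, hC] with p hS hg hint hC
  rw [Real.norm_of_nonneg (setIntegral_nonneg hS hg), ← integral_const_mul]
  refine norm_integral_le_of_norm_le (hint.const_mul C)
    (ae_restrict_of_forall_mem hS fun s hs => ?_)
  simpa only [Real.norm_of_nonneg (hg s hs)] using hC (p, s) rfl hs

theorem isTheta_setIntegral {α β : Type*} [MeasurableSpace β] {μ : Measure β} {l : Filter α}
    {S : α → Set β} {f g : α → β → ℝ} (hS : ∀ᶠ p in l, MeasurableSet (S p))
    (hf : ∀ᶠ p in l, ∀ s ∈ S p, 0 ≤ f p s) (hg : ∀ᶠ p in l, ∀ s ∈ S p, 0 ≤ g p s)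
    (hfint : ∀ᶠ p in l, IntegrableOn (f p) (S p) μ) (hgint : ∀ᶠ p in l, IntegrableOn (g p) (S p) μ)
    (h : (fun q : α × β => f q.1 q.2) =Θ[l.comap Prod.fst ⊓ 𝓟 {q | q.2 ∈ S q.1}]
      fun q => g q.1 q.2) :
    (fun p => ∫ s in S p, f p s ∂μ) =Θ[l] fun p => ∫ s in S p, g p s ∂μ :=
  ⟨isBigO_setIntegral hS hg hgint h.isBigO, isBigO_setIntegral hS hf hfint h.symm.isBigO⟩

theorem sub_nonneg_of_mem_Ioi {n : ℕ} {x : Fin n → ℝ} (hx : Antitone x) {i j : Fin n}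
    (hj : j ∈ Ioi i) : 0 ≤ x i - x j :=
  sub_nonneg.2 (hx (mem_Ioi.1 hj).le)

theorem prod_prod_Ioi_castSucc {M : Type*} [CommMonoid M] {n : ℕ}
    (f : Fin (n + 1) → Fin (n + 1) → M) :
    ∏ i, ∏ j ∈ Ioi i, f i j =
      (∏ i : Fin n, ∏ j ∈ Ioi i, f i.castSucc j.castSucc) *
        ∏ i : Fin n, f i.castSucc (Fin.last n) := by
  have hswap : ∀ {m : ℕ} (g : Fin m → Fin m → M),
      ∏ i, ∏ j ∈ Ioi i, g i j = ∏ j, ∏ i ∈ Iio j, g i j :=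
    fun g => prod_comm' fun _ _ => by simp
  simp only [hswap, Fin.prod_univ_castSucc, Fin.prod_Iio_castSucc]
  simp

theorem prod_prod_Ioi_succ {M : Type*} [CommMonoid M] {n : ℕ}
    (f : Fin (n + 1) → Fin (n + 1) → M) :
    ∏ i, ∏ j ∈ Ioi i, f i j =
      (∏ j : Fin n, f 0 j.succ) * ∏ i : Fin n, ∏ j ∈ Ioi i, f i.succ j.succ := by
  simp only [Fin.prod_univ_succ, Fin.prod_Ioi_zero, Fin.prod_Ioi_succ]

/-- The length `u` truncated at scale `1 / v`: up to a factor two, `truncLength u v` is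
`min u (1 / v)` for `u, v ≥ 0`, with `1 / 0` read as infinity. -/
noncomputable def truncLength (u v : ℝ) : ℝ := u / (1 + u * v)

section truncLength

variable {u v : ℝ}

theorem truncLength_nonneg (hu : 0 ≤ u) (hv : 0 ≤ v) : 0 ≤ truncLength u v := by
  unfold truncLength; positivity

theorem truncLength_le_left (hu : 0 ≤ u) (hv : 0 ≤ v) : truncLength u v ≤ u :=
  div_le_self hu (by nlinarith [mul_nonneg hu hv])

theorem truncLength_mul_le_one (hu : 0 ≤ u) (hv : 0 ≤ v) : truncLength u v * v ≤ 1 := by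
  rw [truncLength, div_mul_eq_mul_div, div_le_one (by positivity)]
  linarith

theorem truncLength_le_mul {w k : ℝ} (hu : 0 ≤ u) (hw : 0 ≤ w) (hv : 0 ≤ v) (hk : 1 ≤ k)
    (h : u ≤ k * w) : truncLength u v ≤ k * truncLength w v := by
  have hwv := mul_nonneg hw hv
  rw [truncLength, truncLength, ← mul_div_assoc,
    div_le_div_iff₀ (by positivity) (by positivity)]
  nlinarith [mul_nonneg (mul_nonneg hu hwv) (sub_nonneg.2 hk)]

theorem le_one_add_mul_mul_truncLength {w : ℝ} (hu : 0 ≤ u) (hv : 0 ≤ v) (hwu : w ≤ u) :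
    w ≤ (1 + w * v) * truncLength u v := by
  rw [truncLength, ← mul_div_assoc, le_div_iff₀ (by positivity)]
  linarith

theorem truncLength_half_le (hu : 0 ≤ u) (hv : 0 ≤ v) :
    truncLength u (v / 2) ≤ 2 * truncLength u v := by
  rw [truncLength, truncLength, ← mul_div_assoc 2, div_le_div_iff₀ (by positivity) (by positivity)]
  nlinarith [mul_nonneg hu hv]

end truncLength

section PointwiseComparison

variable {α : Type*} {l : Filter α}

theorem isTheta_truncLength_exchange {u L v c : α → ℝ} (hu : ∀ᶠ p in l, 0 ≤ u p)
    (hL : ∀ᶠ p in l, 0 ≤ L p) (hv : ∀ᶠ p in l, 0 ≤ v p) (hc : ∀ᶠ p in l, 0 ≤ c p) :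
    (fun p => truncLength (u p) (v p + c p) *
      truncLength (u p + truncLength (L p) (c p)) (v p)) =Θ[l]
    fun p => truncLength (u p) (v p) * truncLength (u p + L p) (v p + c p) := by
  refine isTheta_of_le_mul_of_le_mul 6 6 ?_
  filter_upwards [hu, hL, hv, hc] with p hu hL hv hc
  generalize u p = u, L p = L, v p = v, c p = c at *
  have hnested : truncLength (u + truncLength L c) v =
      (u + L + c * u * L) / (1 + c * L + v * (u + L + c * u * L)) := by
    have h₁ : 1 + L * c ≠ 0 := by positivity
    have h₂ : 1 + (u + L / (1 + L * c)) * v ≠ 0 := by positivity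
    have h₃ : 1 + c * L + v * (u + L + c * u * L) ≠ 0 := by positivity
    unfold truncLength
    rw [div_eq_div_iff h₂ h₃]
    field_simp
    ring
  rw [hnested]
  unfold truncLength
  refine ⟨by positivity, by positivity, ?_⟩
  -- After clearing denominators, the difference of the two sides has nonnegative coefficients.
  constructor <;>
  · rw [div_mul_div_comm, div_mul_div_comm, ← mul_div_assoc,
      div_le_div_iff₀ (by positivity) (by positivity), ← sub_nonneg]
    ring_nf
    positivity

theorem isTheta_mul_truncLength_mul_add {t u v : α → ℝ} (ht : ∀ᶠ p in l, 0 < t p)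
    (hu : ∀ᶠ p in l, 0 ≤ u p) (hv : ∀ᶠ p in l, 0 ≤ v p) :
    (fun p => v p * truncLength (u p / (2 * t p)) (v p) * (t p + u p * v p)) =Θ[l]
      fun p => u p * v p := by
  refine isTheta_of_le_mul_of_le_mul 1 2 ?_
  filter_upwards [ht, hu, hv] with p ht hu hv
  generalize t p = t, u p = u, v p = v at *
  have hquot : v * truncLength (u / (2 * t)) v * (t + u * v) =
      u * v * ((t + u * v) / (2 * t + u * v)) := by
    unfold truncLength
    field_simp
  have hle : (t + u * v) / (2 * t + u * v) ≤ 1 := (div_le_one (by positivity)).2 (by linarith)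
  have hge : 1 / 2 ≤ (t + u * v) / (2 * t + u * v) := by
    rw [div_le_div_iff₀ (by positivity) (by positivity)]
    linarith [mul_nonneg hu hv]
  rw [hquot]
  refine ⟨by positivity, by positivity, ?_, ?_⟩ <;> nlinarith [mul_nonneg hu hv]

theorem isTheta_sinh_mul_exp_neg_mul_one_add {u : α → ℝ} (hu : ∀ᶠ p in l, 0 ≤ u p) :
    (fun p => Real.sinh (u p) * Real.exp (-u p) * (1 + u p)) =Θ[l] u := by
  refine isTheta_of_le_mul_of_le_mul 2 2 ?_
  filter_upwards [hu] with p hu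
  generalize u p = u at *
  have hsinh : Real.sinh u * Real.exp (-u) = (1 - Real.exp (-(2 * u))) / 2 := by
    rw [Real.sinh_eq, div_mul_eq_mul_div, sub_mul, ← Real.exp_add, ← Real.exp_add]
    ring_nf
    simp
  have hlower : 1 - 2 * u ≤ Real.exp (-(2 * u)) := by
    linarith [Real.add_one_le_exp (-(2 * u))]
  have hupper : Real.exp (-(2 * u)) * (1 + 2 * u) ≤ 1 := by
    rw [Real.exp_neg, inv_mul_le_iff₀ (Real.exp_pos _)]
    linarith [Real.add_one_le_exp (2 * u)]
  have hpos := Real.exp_pos (-(2 * u))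
  have := Real.sinh_nonneg_iff.2 hu
  refine ⟨by positivity, hu, ?_, ?_⟩ <;> rw [hsinh] <;> nlinarith

end PointwiseComparison

section Interlacing

variable {n : ℕ}

theorem antitone_of_mem_Icc_tail_init {a : Fin (n + 1) → ℝ} (ha : Antitone a) {s : Fin n → ℝ}
    (hs : s ∈ Set.Icc (Fin.tail a) (Fin.init a)) : Antitone s := by
  intro i j hij
  rcases hij.eq_or_lt with rfl | hij
  · rfl
  · exact (hs.2 j).trans ((ha (Fin.succ_le_castSucc_iff.2 hij)).trans (hs.1 i))

/-- The differences `b_j - b_{n+1}` of the first `n` entries of `b` with the last one: the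
parameters of the recursion over interlacing sequences. -/
def gapsToLast (b : Fin (n + 1) → ℝ) (j : Fin n) : ℝ := b j.castSucc - b (Fin.last n)

theorem gapsToLast_nonneg {b : Fin (n + 1) → ℝ} (hb : Antitone b) (j : Fin n) :
    0 ≤ gapsToLast b j :=
  sub_nonneg.2 (hb (Fin.le_last _))

theorem antitone_gapsToLast {b : Fin (n + 1) → ℝ} (hb : Antitone b) : Antitone (gapsToLast b) :=
  fun _ _ hij => sub_le_sub_right (hb (Fin.castSucc_le_castSucc_iff.2 hij)) _

theorem gapsToLast_sub_gapsToLast (b : Fin (n + 1) → ℝ) (i j : Fin n) :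
    gapsToLast b i - gapsToLast b j = b i.castSucc - b j.castSucc :=
  sub_sub_sub_cancel_right _ _ _

end Interlacing

section Determinant

theorem det_eq_det_sub_of_last_column_eq_one {R : Type*} [CommRing R] {n : ℕ}
    {M : Matrix (Fin (n + 1)) (Fin (n + 1)) R} (hM : ∀ i, M i (Fin.last n) = 1) :
    M.det = (Matrix.of fun i j : Fin n => M i.castSucc j.castSucc - M i.succ j.castSucc).det := by
  set B : Matrix (Fin (n + 1)) (Fin (n + 1)) R := Matrix.of fun i j =>
    Fin.cases (M 0 j) (fun k => M k.succ j - M k.castSucc j) i with hB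
  have hminor : B.submatrix (Fin.succAbove 0) (Fin.last n).succAbove =
      -Matrix.of fun i j : Fin n => M i.castSucc j.castSucc - M i.succ j.castSucc := by
    ext i j
    simp [hB]
  rw [Matrix.det_eq_of_forall_row_eq_smul_add_pred (B := B) (fun _ => 1)
    (fun j => by simp [hB]) (fun i j => by simp [hB]), Matrix.det_succ_column B (Fin.last n),
    Fin.sum_univ_succ, hminor, Matrix.det_neg]
  simp [hB, hM, ← mul_assoc, ← mul_pow]

theorem integral_det_pi {ι : Type*} [Fintype ι] [DecidableEq ι] {X : ι → Type*}
    [∀ i, MeasurableSpace (X i)] {μ : ∀ i, Measure (X i)} [∀ i, SigmaFinite (μ i)]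
    {f : ∀ i, ι → X i → ℝ} (hf : ∀ i j, Integrable (f i j) (μ i)) :
    ∫ s, (Matrix.of fun i j => f i j (s i)).det ∂Measure.pi μ =
      (Matrix.of fun i j => ∫ s, f i j s ∂μ i).det := by
  simp only [← Matrix.det_transpose (Matrix.of _), Matrix.det_apply', Matrix.transpose_apply,
    Matrix.of_apply]
  rw [integral_finsetSum]
  · refine sum_congr rfl fun σ _ => ?_
    rw [integral_const_mul, integral_fintype_prod_eq_prod fun i => f i (σ i)]
  · exact fun σ _ => (Integrable.fintype_prod_dep fun i => hf i (σ i)).const_mul _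

theorem volume_restrict_Icc_pi {ι : Type*} [Fintype ι] (a b : ι → ℝ) :
    volume.restrict (Set.Icc a b) = Measure.pi fun i => volume.restrict (Set.Icc (a i) (b i)) := by
  rw [← Set.pi_univ_Icc, volume_pi, Measure.restrict_pi_pi]

theorem mul_setIntegral_Icc_exp_mul {a a' : ℝ} (h : a' ≤ a) (c : ℝ) :
    c * ∫ s in Set.Icc a' a, Real.exp (s * c) = Real.exp (a * c) - Real.exp (a' * c) := by
  rw [integral_Icc_eq_integral_Ioc, ← intervalIntegral.integral_of_le h]
  simp

variable {n : ℕ}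

/-- The matrix with entries `exp (aᵢ bⱼ)`; its determinant is the alternating sum over the
symmetric group in the heat kernel. -/
noncomputable def expMatrix (a b : Fin n → ℝ) : Matrix (Fin n) (Fin n) ℝ :=
  Matrix.of fun i j => Real.exp (a i * b j)

theorem continuous_det_expMatrix (b : Fin n → ℝ) : Continuous fun a => (expMatrix a b).det := by
  unfold expMatrix
  fun_prop

theorem det_expMatrix_eq_exp_mul_det (a b : Fin n → ℝ) (r : ℝ) :
    (expMatrix a b).det =
      Real.exp (∑ i, a i * r) * (expMatrix a fun j => b j - r).det := by
  rw [Real.exp_sum, ← Matrix.det_mul_column]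
  congr 1
  ext i j
  simp only [expMatrix, Matrix.of_apply, ← Real.exp_add]
  ring_nf

/- Subtracting consecutive rows turns the entries into differences `exp (aᵢ c) - exp (aᵢ₊₁ c)`,
which are integrals of `c exp (s c)` over `[aᵢ₊₁, aᵢ]`. -/
theorem det_expMatrix_succ {a : Fin (n + 1) → ℝ} (ha : Antitone a) (b : Fin (n + 1) → ℝ) :
    (expMatrix a b).det =
      Real.exp (∑ i, a i * b (Fin.last n)) * (∏ j, gapsToLast b j) *
        ∫ s in Set.Icc (Fin.tail a) (Fin.init a), (expMatrix s (gapsToLast b)).det := by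
  have hentry : ∀ i j : Fin n,
      Real.exp (a i.castSucc * gapsToLast b j) - Real.exp (a i.succ * gapsToLast b j) =
        gapsToLast b j * ∫ s in Set.Icc (a i.succ) (a i.castSucc), Real.exp (s * gapsToLast b j) :=
    fun i j => (mul_setIntegral_Icc_exp_mul (ha Fin.castSucc_lt_succ.le) _).symm
  have hintegral : ∫ s in Set.Icc (Fin.tail a) (Fin.init a), (expMatrix s (gapsToLast b)).det =
      (Matrix.of fun i j : Fin n =>
        ∫ s in Set.Icc (a i.succ) (a i.castSucc), Real.exp (s * gapsToLast b j)).det := by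
    rw [volume_restrict_Icc_pi]
    exact integral_det_pi (f := fun _ j s => Real.exp (s * gapsToLast b j))
      fun i j => Continuous.integrableOn_Icc (by fun_prop)
  rw [det_expMatrix_eq_exp_mul_det a b (b (Fin.last n)),
    det_eq_det_sub_of_last_column_eq_one (by simp [expMatrix]), hintegral, mul_assoc,
    ← Matrix.det_mul_row]
  congr 3
  ext i j
  exact hentry i j

theorem det_expMatrix_nonneg {a b : Fin n → ℝ} (ha : Antitone a) (hb : Antitone b) :
    0 ≤ (expMatrix a b).det := by
  induction n with
  | zero => simp
  | succ n ih =>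
    rw [det_expMatrix_succ ha b]
    have hgaps : 0 ≤ ∏ j, gapsToLast b j := prod_nonneg fun j _ => gapsToLast_nonneg hb j
    have hintegral : 0 ≤ ∫ s in Set.Icc (Fin.tail a) (Fin.init a),
        (expMatrix s (gapsToLast b)).det :=
      setIntegral_nonneg measurableSet_Icc fun s hs =>
        ih (antitone_of_mem_Icc_tail_init ha hs) (antitone_gapsToLast hb)
    positivity

end Determinant

section IntegralEstimate

theorem setIntegral_Icc_exp_mul_le {a a' c : ℝ} (h : a' ≤ a) (hc : 0 ≤ c) :
    ∫ s in Set.Icc a' a, Real.exp (s * c) ≤ 2 * (Real.exp (a * c) * truncLength (a - a') c) := by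
  have hlen : 0 ≤ a - a' := sub_nonneg.2 h
  have hcrude : ∫ s in Set.Icc a' a, Real.exp (s * c) ≤ Real.exp (a * c) * (a - a') := by
    calc ∫ s in Set.Icc a' a, Real.exp (s * c) ≤ ∫ _s in Set.Icc a' a, Real.exp (a * c) := by
          refine setIntegral_mono_on (Continuous.integrableOn_Icc (by fun_prop))
            (Continuous.integrableOn_Icc (by fun_prop)) measurableSet_Icc fun s hs => ?_
          have := hs.2
          gcongr
      _ = Real.exp (a * c) * (a - a') := by
          rw [setIntegral_const, smul_eq_mul, mul_comm, Real.volume_real_Icc_of_le h]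
  have hexact := mul_setIntegral_Icc_exp_mul h c
  rw [truncLength, ← mul_div_assoc, ← mul_div_assoc, le_div_iff₀ (by positivity)]
  nlinarith [mul_nonneg hlen (Real.exp_pos (a' * c)).le]

theorem exists_setIntegral_Icc_exp_mul_mul_pow_le (n : ℕ) :
    ∃ K : ℝ, ∀ a a' c : ℝ, a' ≤ a → 0 ≤ c →
      ∫ s in Set.Icc a' a, Real.exp (s * c) * (1 + (a - s) * c) ^ n ≤
        K * (Real.exp (a * c) * truncLength (a - a') c) := by
  refine ⟨2 ^ n * n.factorial * Real.exp (1 / 2) * 4, fun a a' c h hc => ?_⟩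
  set K : ℝ := 2 ^ n * n.factorial * Real.exp (1 / 2)
  -- Half of the exponential decay in `a - s` absorbs the polynomial factor.
  have hpow : ∀ z : ℝ, 0 ≤ z → (1 + z) ^ n ≤ K * Real.exp (z / 2) := fun z hz => by
    have := Real.pow_div_factorial_le_exp ((1 + z) / 2) (by positivity) n
    rw [div_pow, add_div, Real.exp_add, div_div, div_le_iff₀ (by positivity)] at this
    linarith
  have hexp : Real.exp (a * c) = Real.exp (a * (c / 2)) * Real.exp (a * (c / 2)) := by
    rw [← Real.exp_add]
    ring_nf
  calc ∫ s in Set.Icc a' a, Real.exp (s * c) * (1 + (a - s) * c) ^ n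
      ≤ ∫ s in Set.Icc a' a, K * Real.exp (a * (c / 2)) * Real.exp (s * (c / 2)) := by
        refine setIntegral_mono_on (Continuous.integrableOn_Icc (by fun_prop))
          (Continuous.integrableOn_Icc (by fun_prop)) measurableSet_Icc fun s hs => ?_
        refine (mul_le_mul_of_nonneg_left (hpow _ (mul_nonneg (sub_nonneg.2 hs.2) hc))
          (Real.exp_pos _).le).trans_eq ?_
        rw [mul_left_comm, mul_assoc K, ← Real.exp_add, ← Real.exp_add]
        ring_nf
    _ = K * Real.exp (a * (c / 2)) * ∫ s in Set.Icc a' a, Real.exp (s * (c / 2)) :=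
        integral_const_mul _ _
    _ ≤ K * Real.exp (a * (c / 2)) *
          (2 * (Real.exp (a * (c / 2)) * (2 * truncLength (a - a') c))) := by
        refine mul_le_mul_of_nonneg_left ((setIntegral_Icc_exp_mul_le h (by positivity)).trans ?_)
          (by positivity)
        gcongr
        exact truncLength_half_le (sub_nonneg.2 h) hc
    _ = K * 4 * (Real.exp (a * c) * truncLength (a - a') c) := by
        rw [hexp]
        ring

variable {n : ℕ}

/-- The model for `(expMatrix a b).det / gapProd b`: the dominant exponential of the alternating
sum, damped by one truncated gap for each pair of indices. -/
noncomputable def expWeight (a b : Fin n → ℝ) : ℝ :=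
  Real.exp (∑ i, a i * b i) * ∏ i, ∏ j ∈ Ioi i, truncLength (a i - a j) (b i - b j)

theorem expWeight_nonneg {a b : Fin n → ℝ} (ha : Antitone a) (hb : Antitone b) :
    0 ≤ expWeight a b :=
  mul_nonneg (Real.exp_pos _).le <| prod_nonneg fun _ _ => prod_nonneg fun _ hj =>
    truncLength_nonneg (sub_nonneg_of_mem_Ioi ha hj) (sub_nonneg_of_mem_Ioi hb hj)

theorem continuousOn_expWeight {b : Fin n → ℝ} (hb : Antitone b) :
    ContinuousOn (fun a => expWeight a b) {a | Antitone a} := by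
  unfold expWeight truncLength
  refine .mul (by fun_prop) <| continuousOn_finsetProd _ fun i _ => continuousOn_finsetProd _
    fun j hj => .div (by fun_prop) (by fun_prop) fun a ha => ?_
  have := mul_nonneg (sub_nonneg_of_mem_Ioi ha hj) (sub_nonneg_of_mem_Ioi hb hj)
  positivity

/-- The length of the part of `[aᵢ₊₁, aᵢ]` near `aᵢ` on which `exp (s cᵢ)` is comparable to its
maximum. -/
noncomputable def peakWidth (a : Fin (n + 1) → ℝ) (c : Fin n → ℝ) (i : Fin n) : ℝ :=
  truncLength (a i.castSucc - a i.succ) (c i)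

/-- The product of truncated gaps in `expWeight s c`, up to constants, for `s` in the region where
every `exp (sᵢ cᵢ)` is comparable to its maximum. -/
noncomputable def peakGapProd (a : Fin (n + 1) → ℝ) (c : Fin n → ℝ) : ℝ :=
  ∏ i, ∏ j ∈ Ioi i,
    truncLength (a i.castSucc - a j.castSucc + peakWidth a c j) (c i - c j)

variable {a : Fin (n + 1) → ℝ} {c : Fin n → ℝ}

theorem peakWidth_nonneg (ha : Antitone a) (hc : ∀ i, 0 ≤ c i) (i : Fin n) :
    0 ≤ peakWidth a c i :=
  truncLength_nonneg (sub_nonneg.2 (ha Fin.castSucc_lt_succ.le)) (hc i)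

theorem peakWidth_le (ha : Antitone a) (hc : ∀ i, 0 ≤ c i) (i : Fin n) :
    peakWidth a c i ≤ a i.castSucc - a i.succ :=
  truncLength_le_left (sub_nonneg.2 (ha Fin.castSucc_lt_succ.le)) (hc i)

theorem peakWidth_mul_le_one (ha : Antitone a) (hc : ∀ i, 0 ≤ c i) (i : Fin n) :
    peakWidth a c i * c i ≤ 1 :=
  truncLength_mul_le_one (sub_nonneg.2 (ha Fin.castSucc_lt_succ.le)) (hc i)

theorem peakGap_nonneg (ha : Antitone a) (hc : ∀ i, 0 ≤ c i) {i j : Fin n} (hij : i < j) :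
    0 ≤ a i.castSucc - a j.castSucc + peakWidth a c j :=
  add_nonneg (sub_nonneg.2 (ha (Fin.castSucc_le_castSucc_iff.2 hij.le))) (peakWidth_nonneg ha hc j)

theorem peakGapProd_nonneg (ha : Antitone a) (hcanti : Antitone c) (hc : ∀ i, 0 ≤ c i) :
    0 ≤ peakGapProd a c :=
  prod_nonneg fun _ _ => prod_nonneg fun _ hj =>
    truncLength_nonneg (peakGap_nonneg ha hc (mem_Ioi.1 hj))
      (sub_nonneg_of_mem_Ioi hcanti hj)

theorem integrableOn_expWeight (ha : Antitone a) (hcanti : Antitone c) :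
    IntegrableOn (fun s => expWeight s c) (Set.Icc (Fin.tail a) (Fin.init a)) :=
  ((continuousOn_expWeight hcanti).mono fun _ hs =>
    antitone_of_mem_Icc_tail_init ha hs).integrableOn_compact isCompact_Icc

theorem sub_le_mul_peakGap (ha : Antitone a) (hc : ∀ i, 0 ≤ c i) {s : Fin n → ℝ}
    (hs : s ∈ Set.Icc (Fin.tail a) (Fin.init a)) {i j : Fin n} (hij : i < j) :
    s i - s j ≤ (1 + (a j.castSucc - s j) * c j) *
      (a i.castSucc - a j.castSucc + peakWidth a c j) := by
  have hwidth : a j.castSucc - s j ≤ (1 + (a j.castSucc - s j) * c j) * peakWidth a c j :=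
    le_one_add_mul_mul_truncLength (sub_nonneg.2 (ha Fin.castSucc_lt_succ.le)) (hc j)
      (sub_le_sub_left (hs.1 j) _)
  have hle : s i ≤ a i.castSucc := hs.2 i
  have hlen : 0 ≤ a j.castSucc - s j := sub_nonneg.2 (hs.2 j)
  have hgap : 0 ≤ a i.castSucc - a j.castSucc :=
    sub_nonneg.2 (ha (Fin.castSucc_le_castSucc_iff.2 hij.le))
  nlinarith [mul_nonneg (mul_nonneg hlen (hc j)) hgap]

theorem expWeight_le (ha : Antitone a) (hcanti : Antitone c) (hc : ∀ i, 0 ≤ c i)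
    {s : Fin n → ℝ} (hs : s ∈ Set.Icc (Fin.tail a) (Fin.init a)) :
    expWeight s c ≤
      peakGapProd a c * ∏ i, Real.exp (s i * c i) * (1 + (a i.castSucc - s i) * c i) ^ n := by
  have hsanti := antitone_of_mem_Icc_tail_init ha hs
  set k : Fin n → ℝ := fun j => 1 + (a j.castSucc - s j) * c j
  have hk : ∀ j, 1 ≤ k j := fun j =>
    le_add_of_nonneg_right (mul_nonneg (sub_nonneg.2 (hs.2 j)) (hc j))
  have hk_nonneg : ∀ j, 0 ≤ k j := fun j => zero_le_one.trans (hk j)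
  have hfactors : ∏ i, ∏ j ∈ Ioi i, k j ≤ ∏ i, k i ^ n := by
    calc ∏ i : Fin n, ∏ j ∈ Ioi i, k j ≤ ∏ _i : Fin n, ∏ j, k j :=
          prod_le_prod (fun i _ => prod_nonneg fun j _ => hk_nonneg j) fun i _ =>
            prod_le_prod_of_subset_of_one_le (subset_univ _) (fun j _ => hk_nonneg j)
              fun j _ _ => hk j
      _ = ∏ i, k i ^ n := by rw [prod_const, card_univ, Fintype.card_fin, prod_pow]
  have hprod : ∏ i, ∏ j ∈ Ioi i, truncLength (s i - s j) (c i - c j) ≤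
      (∏ i, k i ^ n) * peakGapProd a c := by
    refine le_trans ?_ (mul_le_mul_of_nonneg_right hfactors (peakGapProd_nonneg ha hcanti hc))
    have hs_nonneg : ∀ i, ∀ j ∈ Ioi i, 0 ≤ s i - s j := fun i j hj =>
      sub_nonneg_of_mem_Ioi hsanti hj
    have hc_nonneg : ∀ i, ∀ j ∈ Ioi i, 0 ≤ c i - c j := fun i j hj =>
      sub_nonneg_of_mem_Ioi hcanti hj
    simp only [peakGapProd, ← prod_mul_distrib]
    exact prod_le_prod
      (fun i _ => prod_nonneg fun j hj => truncLength_nonneg (hs_nonneg i j hj) (hc_nonneg i j hj))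
      fun i _ => prod_le_prod
        (fun j hj => truncLength_nonneg (hs_nonneg i j hj) (hc_nonneg i j hj))
        fun j hj => truncLength_le_mul (hs_nonneg i j hj)
          (peakGap_nonneg ha hc (mem_Ioi.1 hj)) (hc_nonneg i j hj) (hk j)
          (sub_le_mul_peakGap ha hc hs (mem_Ioi.1 hj))
  calc expWeight s c ≤ Real.exp (∑ i, s i * c i) * ((∏ i, k i ^ n) * peakGapProd a c) :=
        mul_le_mul_of_nonneg_left hprod (Real.exp_pos _).le
    _ = peakGapProd a c * ∏ i, Real.exp (s i * c i) * k i ^ n := by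
        rw [Real.exp_sum, prod_mul_distrib]
        ring

theorem exists_setIntegral_expWeight_le (n : ℕ) :
    ∃ K : ℝ, ∀ (a : Fin (n + 1) → ℝ) (c : Fin n → ℝ), Antitone a → Antitone c →
      (∀ i, 0 ≤ c i) → ∫ s in Set.Icc (Fin.tail a) (Fin.init a), expWeight s c ≤
        K * (Real.exp (∑ i, Fin.init a i * c i) * ((∏ i, peakWidth a c i) * peakGapProd a c)) := by
  obtain ⟨K, hbound⟩ := exists_setIntegral_Icc_exp_mul_mul_pow_le n
  refine ⟨K ^ n, fun a c ha hcanti hc => ?_⟩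
  have hpeak := peakGapProd_nonneg ha hcanti hc
  calc ∫ s in Set.Icc (Fin.tail a) (Fin.init a), expWeight s c
      ≤ ∫ s in Set.Icc (Fin.tail a) (Fin.init a), peakGapProd a c *
          ∏ i, Real.exp (s i * c i) * (1 + (a i.castSucc - s i) * c i) ^ n :=
        setIntegral_mono_on (integrableOn_expWeight ha hcanti)
          (Continuous.integrableOn_Icc (by fun_prop)) measurableSet_Icc
          fun s hs => expWeight_le ha hcanti hc hs
    _ = peakGapProd a c * ∏ i : Fin n, ∫ s in Set.Icc (a i.succ) (a i.castSucc),
          Real.exp (s * c i) * (1 + (a i.castSucc - s) * c i) ^ n := by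
        rw [integral_const_mul, volume_restrict_Icc_pi]
        congr 1
        exact integral_fintype_prod_eq_prod
          fun i s => Real.exp (s * c i) * (1 + (a i.castSucc - s) * c i) ^ n
    _ ≤ peakGapProd a c * ∏ i, (K * (Real.exp (Fin.init a i * c i) * peakWidth a c i)) := by
        refine mul_le_mul_of_nonneg_left (prod_le_prod (fun i _ => ?_) fun i _ =>
          hbound _ _ _ (ha Fin.castSucc_lt_succ.le) (hc i)) hpeak
        refine setIntegral_nonneg measurableSet_Icc fun s hs => ?_
        have := mul_nonneg (sub_nonneg.2 hs.2) (hc i)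
        positivity
    _ = _ := by
        rw [prod_mul_distrib, prod_mul_distrib, Real.exp_sum, prod_const, card_univ,
          Fintype.card_fin]
        ring

/-- The box `∏ᵢ [aᵢ - mᵢ / 2, aᵢ - mᵢ / 4]` with `m` the peak widths: `expWeight s c` is as large
as it gets, up to constants, and the gaps of `s` do not degenerate. -/
noncomputable def peakBox (a : Fin (n + 1) → ℝ) (c : Fin n → ℝ) : Set (Fin n → ℝ) :=
  Set.Icc (fun i => a i.castSucc - peakWidth a c i / 2) fun i => a i.castSucc - peakWidth a c i / 4

theorem peakBox_subset (ha : Antitone a) (hc : ∀ i, 0 ≤ c i) :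
    peakBox a c ⊆ Set.Icc (Fin.tail a) (Fin.init a) := by
  refine Set.Icc_subset_Icc (fun i => ?_) fun i => ?_ <;>
  · have := peakWidth_nonneg ha hc i
    have := peakWidth_le ha hc i
    simp only [Fin.tail, Fin.init]
    linarith

theorem volume_real_peakBox (ha : Antitone a) (hc : ∀ i, 0 ≤ c i) :
    volume.real (peakBox a c) = ∏ i, peakWidth a c i / 4 := by
  rw [measureReal_def, peakBox, Real.volume_Icc_pi_toReal
    fun i => sub_le_sub_left (by linarith [peakWidth_nonneg ha hc i]) _]
  exact prod_congr rfl fun i _ => by ring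

theorem le_mul_expWeight_of_mem_peakBox (ha : Antitone a) (hcanti : Antitone c)
    (hc : ∀ i, 0 ≤ c i) {s : Fin n → ℝ} (hs : s ∈ peakBox a c) :
    Real.exp (∑ i, Fin.init a i * c i) * peakGapProd a c ≤
      ((∏ _i : Fin n, Real.exp (1 / 2)) * ∏ i : Fin n, ∏ _j ∈ Ioi i, 4) * expWeight s c := by
  have hsanti := antitone_of_mem_Icc_tail_init ha (peakBox_subset ha hc hs)
  have hexp : Real.exp (∑ i, Fin.init a i * c i) ≤
      (∏ _i : Fin n, Real.exp (1 / 2)) * Real.exp (∑ i, s i * c i) := by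
    rw [← Real.exp_sum, ← Real.exp_add, ← sum_add_distrib]
    refine Real.exp_le_exp.2 (sum_le_sum fun i _ => ?_)
    have hlower : Fin.init a i - peakWidth a c i / 2 ≤ s i := hs.1 i
    nlinarith [mul_le_mul_of_nonneg_right hlower (hc i), peakWidth_mul_le_one ha hc i]
  have hgap : ∀ i, ∀ j ∈ Ioi i,
      a i.castSucc - a j.castSucc + peakWidth a c j ≤ 4 * (s i - s j) := fun i j hj => by
    have hlower : a i.castSucc - peakWidth a c i / 2 ≤ s i := hs.1 i
    have hupper : s j ≤ a j.castSucc - peakWidth a c j / 4 := hs.2 j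
    have hanti : a j.castSucc ≤ a i.succ := ha (Fin.succ_le_castSucc_iff.2 (mem_Ioi.1 hj))
    linarith [peakWidth_le ha hc i, peakWidth_nonneg ha hc i]
  have htrunc : ∀ i, ∀ j ∈ Ioi i, 0 ≤
      truncLength (a i.castSucc - a j.castSucc + peakWidth a c j) (c i - c j) := fun i j hj =>
    truncLength_nonneg (peakGap_nonneg ha hc (mem_Ioi.1 hj))
      (sub_nonneg_of_mem_Ioi hcanti hj)
  have hprod : peakGapProd a c ≤ (∏ i : Fin n, ∏ _j ∈ Ioi i, 4) *
      ∏ i, ∏ j ∈ Ioi i, truncLength (s i - s j) (c i - c j) := by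
    simp only [peakGapProd, ← prod_mul_distrib]
    exact prod_le_prod (fun i _ => prod_nonneg (htrunc i)) fun i _ =>
      prod_le_prod (htrunc i) fun j hj =>
        truncLength_le_mul (peakGap_nonneg ha hc (mem_Ioi.1 hj))
          (sub_nonneg_of_mem_Ioi hsanti hj) (sub_nonneg_of_mem_Ioi hcanti hj)
          (by norm_num) (hgap i j hj)
  refine (mul_le_mul hexp hprod (peakGapProd_nonneg ha hcanti hc) (by positivity)).trans_eq ?_
  rw [expWeight]
  ring

theorem exists_le_mul_setIntegral_expWeight (n : ℕ) :
    ∃ K : ℝ, ∀ (a : Fin (n + 1) → ℝ) (c : Fin n → ℝ), Antitone a → Antitone c →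
      (∀ i, 0 ≤ c i) →
        Real.exp (∑ i, Fin.init a i * c i) * ((∏ i, peakWidth a c i) * peakGapProd a c) ≤
          K * ∫ s in Set.Icc (Fin.tail a) (Fin.init a), expWeight s c := by
  set D : ℝ := (∏ _i : Fin n, Real.exp (1 / 2)) * ∏ i : Fin n, ∏ _j ∈ Ioi i, 4
  refine ⟨4 ^ n * D, fun a c ha hcanti hc => ?_⟩
  have hsub := peakBox_subset ha hc
  have hint := integrableOn_expWeight ha hcanti
  have hlower : Real.exp (∑ i, Fin.init a i * c i) * peakGapProd a c * volume.real (peakBox a c) ≤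
      ∫ s in peakBox a c, D * expWeight s c :=
    setIntegral_ge_of_const_le_real measurableSet_Icc isCompact_Icc.measure_ne_top
      (fun s hs => le_mul_expWeight_of_mem_peakBox ha hcanti hc hs)
      ((hint.mono_set hsub).const_mul D)
  have hmono : ∫ s in peakBox a c, expWeight s c ≤
      ∫ s in Set.Icc (Fin.tail a) (Fin.init a), expWeight s c :=
    setIntegral_mono_set hint (ae_restrict_of_forall_mem measurableSet_Icc fun s hs =>
      expWeight_nonneg (antitone_of_mem_Icc_tail_init ha hs) hcanti) hsub.eventuallyLE
  rw [integral_const_mul, volume_real_peakBox ha hc, prod_div_distrib, prod_const, card_univ,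
    Fintype.card_fin, mul_div_assoc', div_le_iff₀ (by positivity)] at hlower
  calc _ = Real.exp (∑ i, Fin.init a i * c i) * peakGapProd a c * ∏ i, peakWidth a c i := by ring
    _ ≤ D * (∫ s in peakBox a c, expWeight s c) * 4 ^ n := hlower
    _ ≤ D * (∫ s in Set.Icc (Fin.tail a) (Fin.init a), expWeight s c) * 4 ^ n := by gcongr
    _ = _ := by ring

theorem isTheta_setIntegral_expWeight {α : Type*} {l : Filter α} {a : α → Fin (n + 1) → ℝ}
    {c : α → Fin n → ℝ} (ha : ∀ᶠ p in l, Antitone (a p)) (hcanti : ∀ᶠ p in l, Antitone (c p))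
    (hc : ∀ᶠ p in l, ∀ i, 0 ≤ c p i) :
    (fun p => ∫ s in Set.Icc (Fin.tail (a p)) (Fin.init (a p)), expWeight s (c p)) =Θ[l]
      fun p => Real.exp (∑ i, Fin.init (a p) i * c p i) *
        ((∏ i, peakWidth (a p) (c p) i) * peakGapProd (a p) (c p)) := by
  obtain ⟨K, hK⟩ := exists_setIntegral_expWeight_le n
  obtain ⟨D, hD⟩ := exists_le_mul_setIntegral_expWeight n
  refine isTheta_of_le_mul_of_le_mul K D ?_
  filter_upwards [ha, hcanti, hc] with p ha hcanti hc
  exact ⟨setIntegral_nonneg measurableSet_Icc fun s hs =>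
      expWeight_nonneg (antitone_of_mem_Icc_tail_init ha hs) hcanti,
    mul_nonneg (Real.exp_pos _).le (mul_nonneg (prod_nonneg fun i _ => peakWidth_nonneg ha hc i)
      (peakGapProd_nonneg ha hcanti hc)),
    hK _ _ ha hcanti hc, hD _ _ ha hcanti hc⟩

end IntegralEstimate

section PeakProduct

variable {α : Type*} {l : Filter α} {n : ℕ}

theorem isTheta_peakWidth_zero_mul_prod {a : α → Fin (n + 2) → ℝ} {c : α → Fin (n + 1) → ℝ}
    (ha : ∀ᶠ p in l, Antitone (a p)) (hcanti : ∀ᶠ p in l, Antitone (c p))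
    (hc : ∀ᶠ p in l, ∀ i, 0 ≤ c p i) :
    (fun p => peakWidth (a p) (c p) 0 * ∏ j : Fin n,
      truncLength (a p 0 - a p j.succ.castSucc + peakWidth (a p) (c p) j.succ)
        (c p 0 - c p j.succ)) =Θ[l]
    fun p => (∏ j : Fin n, truncLength (a p 0 - a p j.succ.castSucc) (c p 0 - c p j.succ)) *
      truncLength (a p 0 - a p (Fin.last (n + 1))) (c p 0) := by
  refine isTheta_mul_prod_of_telescoping
    (G := fun (k : Fin (n + 1)) p => truncLength (a p 0 - a p k.succ) (c p 0)) fun j => ?_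
  have hexchange := isTheta_truncLength_exchange (l := l)
    (u := fun p => a p 0 - a p j.succ.castSucc)
    (L := fun p => a p j.succ.castSucc - a p j.succ.succ)
    (v := fun p => c p 0 - c p j.succ) (c := fun p => c p j.succ)
    (ha.mono fun p ha => sub_nonneg.2 (ha (Fin.zero_le _)))
    (ha.mono fun p ha => sub_nonneg.2 (ha Fin.castSucc_lt_succ.le))
    (hcanti.mono fun p hc => sub_nonneg.2 (hc (Fin.zero_le _)))
    (hc.mono fun p hc => hc _)
  simpa only [sub_add_cancel, sub_add_sub_cancel, Fin.succ_castSucc, peakWidth] using hexchange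

theorem isTheta_prod_peakWidth_mul_peakGapProd {a : α → Fin (n + 1) → ℝ} {c : α → Fin n → ℝ}
    (ha : ∀ᶠ p in l, Antitone (a p)) (hcanti : ∀ᶠ p in l, Antitone (c p))
    (hc : ∀ᶠ p in l, ∀ i, 0 ≤ c p i) :
    (fun p => (∏ i, peakWidth (a p) (c p) i) * peakGapProd (a p) (c p)) =Θ[l] fun p =>
      (∏ i : Fin n, ∏ j ∈ Ioi i,
        truncLength (a p i.castSucc - a p j.castSucc) (c p i - c p j)) *
        ∏ i : Fin n, truncLength (a p i.castSucc - a p (Fin.last n)) (c p i) := by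
  induction n with
  | zero => simpa [peakGapProd] using isTheta_refl _ l
  | succ n ih =>
    have hrest := ih (a := fun p => Fin.tail (a p)) (c := fun p => Fin.tail (c p))
      (ha.mono fun p ha i j hij => ha (Fin.succ_le_succ_iff.2 hij))
      (hcanti.mono fun p hc i j hij => hc (Fin.succ_le_succ_iff.2 hij))
      (hc.mono fun p hc i => hc i.succ)
    refine EventuallyEq.trans_isTheta (.of_forall fun p => ?_)
      (((isTheta_peakWidth_zero_mul_prod ha hcanti hc).mul hrest).trans_eventuallyEq
        (.of_forall fun p => ?_)) <;> beta_reduce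
    · rw [peakGapProd, prod_prod_Ioi_succ, Fin.prod_univ_succ, mul_mul_mul_comm]
      rfl
    · rw [prod_prod_Ioi_succ, Fin.prod_univ_succ, mul_mul_mul_comm]
      rfl

end PeakProduct

section DeterminantEstimate

variable {n : ℕ}

/-- The Vandermonde product of the gaps of `b`. -/
def gapProd (b : Fin n → ℝ) : ℝ := ∏ i, ∏ j ∈ Ioi i, (b i - b j)

theorem gapProd_nonneg {b : Fin n → ℝ} (hb : Antitone b) : 0 ≤ gapProd b :=
  prod_nonneg fun _ _ => prod_nonneg fun _ hj => sub_nonneg_of_mem_Ioi hb hj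

theorem gapProd_succ (b : Fin (n + 1) → ℝ) :
    gapProd b = gapProd (gapsToLast b) * ∏ j, gapsToLast b j := by
  simp only [gapProd, gapsToLast_sub_gapsToLast]
  exact prod_prod_Ioi_castSucc _

theorem expWeight_succ (a b : Fin (n + 1) → ℝ) :
    expWeight a b = Real.exp (∑ i, a i * b (Fin.last n)) *
      (Real.exp (∑ i, Fin.init a i * gapsToLast b i) *
        ((∏ i : Fin n, ∏ j ∈ Ioi i,
          truncLength (a i.castSucc - a j.castSucc) (gapsToLast b i - gapsToLast b j)) *
          ∏ i : Fin n, truncLength (a i.castSucc - a (Fin.last n)) (gapsToLast b i))) := by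
  have hsum : ∑ i, a i * b i =
      ∑ i, a i * b (Fin.last n) + ∑ i, Fin.init a i * gapsToLast b i := by
    simp only [Fin.sum_univ_castSucc, Fin.init, gapsToLast, mul_sub, sum_sub_distrib]
    ring
  rw [expWeight, hsum, Real.exp_add, prod_prod_Ioi_castSucc, mul_assoc]
  simp only [gapsToLast_sub_gapsToLast]
  rfl

theorem isTheta_det_expMatrix {α : Type*} {l : Filter α} {a b : α → Fin n → ℝ}
    (ha : ∀ᶠ p in l, Antitone (a p)) (hb : ∀ᶠ p in l, Antitone (b p)) :
    (fun p => (expMatrix (a p) (b p)).det) =Θ[l]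
      fun p => gapProd (b p) * expWeight (a p) (b p) := by
  induction n generalizing α with
  | zero => simpa [gapProd, expWeight] using isTheta_refl _ l
  | succ n ih =>
    have hc := hb.mono fun p hb => gapsToLast_nonneg hb
    have hcanti := hb.mono fun p hb => antitone_gapsToLast hb
    have hpointwise := ih (l := l.comap Prod.fst ⊓
        𝓟 {q : α × (Fin n → ℝ) | q.2 ∈ Set.Icc (Fin.tail (a q.1)) (Fin.init (a q.1))})
      (a := Prod.snd) (b := fun q => gapsToLast (b q.1))
      (eventually_inf_principal.2 <| (ha.comap _).mono fun q ha hq =>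
        antitone_of_mem_Icc_tail_init ha hq)
      ((hcanti.comap _).filter_mono inf_le_left)
    have hintegral : (fun p => ∫ s in Set.Icc (Fin.tail (a p)) (Fin.init (a p)),
          (expMatrix s (gapsToLast (b p))).det) =Θ[l] fun p =>
        ∫ s in Set.Icc (Fin.tail (a p)) (Fin.init (a p)),
          gapProd (gapsToLast (b p)) * expWeight s (gapsToLast (b p)) := by
      refine isTheta_setIntegral (.of_forall fun _ => measurableSet_Icc) ?_ ?_ ?_ ?_ hpointwise
      · filter_upwards [ha, hcanti] with p ha hcanti s hs
        exact det_expMatrix_nonneg (antitone_of_mem_Icc_tail_init ha hs) hcanti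
      · filter_upwards [ha, hcanti] with p ha hcanti s hs
        exact mul_nonneg (gapProd_nonneg hcanti)
          (expWeight_nonneg (antitone_of_mem_Icc_tail_init ha hs) hcanti)
      · exact .of_forall fun p => (continuous_det_expMatrix _).integrableOn_Icc
      · filter_upwards [ha, hcanti] with p ha hcanti
        exact (integrableOn_expWeight ha hcanti).const_mul _
    simp only [integral_const_mul] at hintegral
    have hweight := (isTheta_setIntegral_expWeight ha hcanti hc).trans
      ((isTheta_refl _ l).mul (isTheta_prod_peakWidth_mul_peakGapProd ha hcanti hc))
    refine EventuallyEq.trans_isTheta (ha.mono fun p ha => det_expMatrix_succ ha (b p)) <|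
      ((isTheta_refl _ l).mul (hintegral.trans ((isTheta_refl _ l).mul hweight))).trans_eventuallyEq
        (.of_forall fun p => ?_)
    simp only [gapProd_succ, expWeight_succ]
    ring

end DeterminantEstimate

section HeatKernel

variable {n : ℕ}

theorem sum_sign_mul_exp_eq_det_expMatrix (t : ℝ) (x y : Fin n → ℝ) :
    ∑ σ : Equiv.Perm (Fin n), ((Equiv.Perm.sign σ : ℤ) : ℝ) *
      Real.exp ((1 / (2 * t)) * ∑ k, x (σ k) * y k) =
      (expMatrix (fun i => x i / (2 * t)) y).det := by
  rw [Matrix.det_apply']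
  refine sum_congr rfl fun σ _ => ?_
  simp only [expMatrix, Matrix.of_apply, ← Real.exp_sum, mul_sum]
  congr 3
  ext k
  ring

theorem exp_neg_sum_sq_add_sum_sq_mul_exp_sum (t : ℝ) (x y : Fin n → ℝ) :
    Real.exp (-((∑ k, x k ^ 2) + ∑ k, y k ^ 2) / (4 * t)) *
        Real.exp (∑ k, x k / (2 * t) * y k) =
      Real.exp (-(∑ k, (x k - y k) ^ 2) / (4 * t)) := by
  rw [← Real.exp_add, ← sum_add_distrib, ← sum_neg_distrib, ← sum_neg_distrib, sum_div, sum_div,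
    ← sum_add_distrib]
  congr 1
  refine sum_congr rfl fun k _ => ?_
  ring

theorem exp_neg_rhoSum (x : Fin n → ℝ) :
    Real.exp (-rhoSum x) = ∏ i, ∏ j ∈ Ioi i, Real.exp (-(x i - x j)) := by
  simp only [rhoSum, ← sum_neg_distrib, Real.exp_sum]

/-- Up to a constant, the curved heat kernel without its `exp (-|ρ|² t)`, `t`-power and `sinh`
factors, multiplied by the denominators `t + (xᵢ - xⱼ) (yᵢ - yⱼ)` of the sharp estimate. -/
noncomputable def clearedKernel (t : ℝ) (x y : Fin n → ℝ) : ℝ :=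
  Real.exp (-((∑ k, x k ^ 2) + ∑ k, y k ^ 2) / (4 * t)) *
    (∑ σ : Equiv.Perm (Fin n), ((Equiv.Perm.sign σ : ℤ) : ℝ) *
      Real.exp ((1 / (2 * t)) * ∑ k, x (σ k) * y k)) *
    ∏ i, ∏ j ∈ Ioi i, (t + (x i - x j) * (y i - y j))

/-- The quantity `E` to which the sharp estimate compares `clearedKernel`. -/
noncomputable def sharpBound (t : ℝ) (x y : Fin n → ℝ) : ℝ :=
  (∏ i, ∏ j ∈ Ioi i, Real.sinh (x i - x j) * Real.sinh (y i - y j)) *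
    Real.exp (-rhoSum x - rhoSum y) *
    Real.exp (-(∑ k, (x k - y k) ^ 2) / (4 * t)) *
    ∏ i, ∏ j ∈ Ioi i, (1 + x i - x j) * (1 + y i - y j)

theorem clearedKernel_eq_det_expMatrix (t : ℝ) (x y : Fin n → ℝ) :
    clearedKernel t x y = Real.exp (-((∑ k, x k ^ 2) + ∑ k, y k ^ 2) / (4 * t)) *
      (expMatrix (fun i => x i / (2 * t)) y).det *
      ∏ i, ∏ j ∈ Ioi i, (t + (x i - x j) * (y i - y j)) := by
  rw [clearedKernel, sum_sign_mul_exp_eq_det_expMatrix]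

theorem sharpBound_eq (t : ℝ) (x y : Fin n → ℝ) :
    sharpBound t x y = Real.exp (-(∑ k, (x k - y k) ^ 2) / (4 * t)) *
      ((∏ i, ∏ j ∈ Ioi i,
          Real.sinh (x i - x j) * Real.exp (-(x i - x j)) * (1 + (x i - x j))) *
        ∏ i, ∏ j ∈ Ioi i,
          Real.sinh (y i - y j) * Real.exp (-(y i - y j)) * (1 + (y i - y j))) := by
  rw [sharpBound, sub_eq_add_neg (-rhoSum x), Real.exp_add, exp_neg_rhoSum, exp_neg_rhoSum]
  simp only [prod_mul_distrib, add_sub_assoc]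
  ring

theorem antitone_div_two_mul {t : ℝ} (ht : 0 < t) {x : Fin n → ℝ} (hx : Antitone x) :
    Antitone fun i => x i / (2 * t) :=
  fun _ _ hij => div_le_div_of_nonneg_right (hx hij) (by positivity)

theorem clearedKernel_nonneg {t : ℝ} (ht : 0 < t) {x y : Fin n → ℝ} (hx : Antitone x)
    (hy : Antitone y) : 0 ≤ clearedKernel t x y := by
  rw [clearedKernel_eq_det_expMatrix]
  refine mul_nonneg (mul_nonneg (Real.exp_pos _).le
    (det_expMatrix_nonneg (antitone_div_two_mul ht hx) hy)) ?_
  exact prod_nonneg fun i _ => prod_nonneg fun j hj => add_nonneg ht.le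
    (mul_nonneg (sub_nonneg_of_mem_Ioi hx hj) (sub_nonneg_of_mem_Ioi hy hj))

theorem prod_sinh_mul_exp_neg_mul_one_add_nonneg {x : Fin n → ℝ} (hx : Antitone x) :
    0 ≤ ∏ i, ∏ j ∈ Ioi i,
      Real.sinh (x i - x j) * Real.exp (-(x i - x j)) * (1 + (x i - x j)) :=
  prod_nonneg fun i _ => prod_nonneg fun j hj => by
    have hgap := sub_nonneg_of_mem_Ioi hx hj
    have := Real.sinh_nonneg_iff.2 hgap
    positivity

theorem sharpBound_nonneg (t : ℝ) {x y : Fin n → ℝ} (hx : Antitone x) (hy : Antitone y) :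
    0 ≤ sharpBound t x y := by
  rw [sharpBound_eq]
  exact mul_nonneg (Real.exp_pos _).le (mul_nonneg (prod_sinh_mul_exp_neg_mul_one_add_nonneg hx)
    (prod_sinh_mul_exp_neg_mul_one_add_nonneg hy))

variable {α : Type*} {l : Filter α} {t : α → ℝ} {x y : α → Fin n → ℝ}

theorem isTheta_prod_sinh_mul_exp_neg_mul_one_add (hx : ∀ᶠ p in l, Antitone (x p)) :
    (fun p => ∏ i, ∏ j ∈ Ioi i, Real.sinh (x p i - x p j) * Real.exp (-(x p i - x p j)) *
      (1 + (x p i - x p j))) =Θ[l] fun p => gapProd (x p) :=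
  .finsetProd fun _ _ => .finsetProd fun _ hj =>
    isTheta_sinh_mul_exp_neg_mul_one_add (hx.mono fun _ hx => sub_nonneg_of_mem_Ioi hx hj)

theorem isTheta_gapProd_mul_prod_truncLength_mul_prod_add (ht : ∀ᶠ p in l, 0 < t p)
    (hx : ∀ᶠ p in l, Antitone (x p)) (hy : ∀ᶠ p in l, Antitone (y p)) :
    (fun p => gapProd (y p) *
      (∏ i, ∏ j ∈ Ioi i, truncLength (x p i / (2 * t p) - x p j / (2 * t p)) (y p i - y p j)) *
      ∏ i, ∏ j ∈ Ioi i, (t p + (x p i - x p j) * (y p i - y p j))) =Θ[l]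
    fun p => gapProd (x p) * gapProd (y p) := by
  simp only [gapProd, ← prod_mul_distrib, ← sub_div]
  exact .finsetProd fun _ _ => .finsetProd fun _ hj => isTheta_mul_truncLength_mul_add ht
    (hx.mono fun _ hx => sub_nonneg_of_mem_Ioi hx hj)
    (hy.mono fun _ hy => sub_nonneg_of_mem_Ioi hy hj)

theorem isTheta_clearedKernel (ht : ∀ᶠ p in l, 0 < t p) (hx : ∀ᶠ p in l, Antitone (x p))
    (hy : ∀ᶠ p in l, Antitone (y p)) :
    (fun p => clearedKernel (t p) (x p) (y p)) =Θ[l] fun p =>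
      Real.exp (-(∑ k, (x p k - y p k) ^ 2) / (4 * t p)) * (gapProd (x p) * gapProd (y p)) := by
  have hdet := isTheta_det_expMatrix (ht.mp (hx.mono fun p hx ht => antitone_div_two_mul ht hx)) hy
  simp only [clearedKernel_eq_det_expMatrix]
  refine (((isTheta_refl _ l).mul hdet).mul (isTheta_refl _ l)).trans ?_
  refine EventuallyEq.trans_isTheta (.of_forall fun p => ?_) ((isTheta_refl _ l).mul
    (isTheta_gapProd_mul_prod_truncLength_mul_prod_add ht hx hy))
  simp only [← exp_neg_sum_sq_add_sum_sq_mul_exp_sum, expWeight]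
  ring

theorem isTheta_clearedKernel_sharpBound (ht : ∀ᶠ p in l, 0 < t p)
    (hx : ∀ᶠ p in l, Antitone (x p)) (hy : ∀ᶠ p in l, Antitone (y p)) :
    (fun p => clearedKernel (t p) (x p) (y p)) =Θ[l]
      fun p => sharpBound (t p) (x p) (y p) := by
  simp only [sharpBound_eq]
  exact (isTheta_clearedKernel ht hx hy).trans ((isTheta_refl _ l).mul
    ((isTheta_prod_sinh_mul_exp_neg_mul_one_add hx).mul
      (isTheta_prod_sinh_mul_exp_neg_mul_one_add hy))).symm

end HeatKernel

/-- Sharp estimate for the radial heat kernel of the curved complex symmetric space of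
type `A_{n-1}`: for `t > 0` and weakly decreasing `x, y`,
`e^{−(|x|²+|y|²)/(4t)} · (∑_σ sgn σ · e^{(1/(2t))∑ x_{σ(k)} y_k}) · ∏_{i<j}(t+(x_i−x_j)(y_i−y_j))`
is comparable with
`(∏_{i<j} sinh(x_i−x_j) sinh(y_i−y_j)) · e^{−ρ(x)−ρ(y)} · e^{−|x−y|²/(4t)} · ∏_{i<j}(1+x_i−x_j)(1+y_i−y_j)`,
with constants depending only on `n`. -/
theorem curved_heat_kernel_estimate_An (n : ℕ) (hn : 1 ≤ n) :
    ∃ C₁ C₂ : ℝ, 0 < C₁ ∧ 0 < C₂ ∧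
      ∀ t : ℝ, 0 < t → ∀ x y : Fin n → ℝ, Antitone x → Antitone y →
        C₁ * ((∏ i : Fin n, ∏ j ∈ Finset.Ioi i, Real.sinh (x i - x j) * Real.sinh (y i - y j)) *
              Real.exp (-rhoSum x - rhoSum y) *
              Real.exp (-(∑ k, (x k - y k) ^ 2) / (4 * t)) *
              ∏ i : Fin n, ∏ j ∈ Finset.Ioi i, (1 + x i - x j) * (1 + y i - y j)) ≤
            Real.exp (-((∑ k, x k ^ 2) + ∑ k, y k ^ 2) / (4 * t)) *
              (∑ σ : Equiv.Perm (Fin n), ((Equiv.Perm.sign σ : ℤ) : ℝ) *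
                Real.exp ((1 / (2 * t)) * ∑ k, x (σ k) * y k)) *
              (∏ i : Fin n, ∏ j ∈ Finset.Ioi i, (t + (x i - x j) * (y i - y j))) ∧
        Real.exp (-((∑ k, x k ^ 2) + ∑ k, y k ^ 2) / (4 * t)) *
              (∑ σ : Equiv.Perm (Fin n), ((Equiv.Perm.sign σ : ℤ) : ℝ) *
                Real.exp ((1 / (2 * t)) * ∑ k, x (σ k) * y k)) *
              (∏ i : Fin n, ∏ j ∈ Finset.Ioi i, (t + (x i - x j) * (y i - y j))) ≤
          C₂ * ((∏ i : Fin n, ∏ j ∈ Finset.Ioi i, Real.sinh (x i - x j) * Real.sinh (y i - y j)) *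
              Real.exp (-rhoSum x - rhoSum y) *
              Real.exp (-(∑ k, (x k - y k) ^ 2) / (4 * t)) *
              ∏ i : Fin n, ∏ j ∈ Finset.Ioi i, (1 + x i - x j) * (1 + y i - y j)) := by
  obtain ⟨C₁, C₂, hC₁, hC₂, hbound⟩ := exists_forall_le_and_le_of_isTheta_principal
    (s := {q : ℝ × (Fin n → ℝ) × (Fin n → ℝ) | 0 < q.1 ∧ Antitone q.2.1 ∧ Antitone q.2.2})
    (fun _ ⟨ht, hx, hy⟩ => clearedKernel_nonneg ht hx hy)
    (fun q ⟨_, hx, hy⟩ => sharpBound_nonneg q.1 hx hy)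
    (isTheta_clearedKernel_sharpBound (eventually_principal.2 fun _ h => h.1)
      (eventually_principal.2 fun _ h => h.2.1) (eventually_principal.2 fun _ h => h.2.2))
  exact ⟨C₁, C₂, hC₁, hC₂, fun t ht x y hx hy => hbound (t, x, y) ⟨ht, hx, hy⟩⟩
end

section
/- (Approximate factorization) For every n ≥ 1 there exist constants C₁, C₂ > 0 depending only on n such that for all weakly decreasing λ, x ∈ ℝ^{n+1} one has C₁·∏_{k=1}^n I_k⁽ⁿ⁾(λ;x) ≤ I⁽ⁿ⁾(λ;x) ≤ C₂·∏_{k=1}^n I_k⁽ⁿ⁾(λ;x). -/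
open Finset MeasureTheory

/-- The iterated integral `I⁽ⁿ⁾(λ;x)` over the box `y_k ∈ [x_{k+1}, x_k]`, `k = 1,…,n`, of
`exp(−∑_k (λ_k−λ_{n+1})(x_k−y_k)) · ∏_{i<j≤n} (y_i−y_j)(λ_i−λ_j)/(1+(y_i−y_j)(λ_i−λ_j))`. -/
noncomputable def Iint (n : ℕ) (lam x : Fin (n + 1) → ℝ) : ℝ :=
  ∫ y in Set.Icc (fun k : Fin n => x k.succ) (fun k : Fin n => x k.castSucc),
    Real.exp (-∑ k : Fin n, (lam k.castSucc - lam (Fin.last n)) * (x k.castSucc - y k)) *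
      ∏ i : Fin n, ∏ j ∈ Finset.Ioi i,
        ((y i - y j) * (lam i.castSucc - lam j.castSucc) /
          (1 + (y i - y j) * (lam i.castSucc - lam j.castSucc)))

/-- The one-dimensional factor `I_k⁽ⁿ⁾(λ;x)`
`= ∫_{x_{k+1}}^{x_k} e^{−(λ_k−λ_{n+1})(x_k−y)} ∏_{j<k} (x_j−y)(λ_j−λ_k)/(1+(x_j−y)(λ_j−λ_k)) dy`. -/
noncomputable def Ifac (n : ℕ) (lam x : Fin (n + 1) → ℝ) (k : Fin n) : ℝ :=
  ∫ y in (x k.succ)..(x k.castSucc),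
    Real.exp (-(lam k.castSucc - lam (Fin.last n)) * (x k.castSucc - y)) *
      ∏ j ∈ Finset.Iio k,
        ((x j.castSucc - y) * (lam j.castSucc - lam k.castSucc) /
          (1 + (x j.castSucc - y) * (lam j.castSucc - lam k.castSucc)))

/-!
By Fubini, `∏ₖ Iₖ` is the integral over the same box of the integrand of `I` with every `yᵢ - yⱼ`
replaced by the larger `xᵢ - yⱼ`; since `t ↦ t / (1 + t)` is increasing, this gives the upper bound.
For the lower bound, contract the box by the factor `1 / 2` towards its upper corner. The midpoint
`mₖ` of `xₖ` and `yₖ` satisfies `mᵢ - mⱼ ≥ (xᵢ - yⱼ) / 2`, because `xⱼ ≤ xᵢ₊₁ ≤ yᵢ` for `i < j`, so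
each pair `i < j` costs at most a factor `2`, while the exponential only increases. The change of
variables costs `2ⁿ`.
-/

section Saturation

/-- The saturation map `t ↦ t / (1 + t)`, meant for `t ≥ 0`; each pair of indices contributes one
such factor to the densities below. -/
noncomputable def saturation (t : ℝ) : ℝ :=
  t / (1 + t)

lemma saturation_nonneg {t : ℝ} (ht : 0 ≤ t) : 0 ≤ saturation t :=
  div_nonneg ht (by linarith)

lemma monotoneOn_saturation : MonotoneOn saturation (Set.Ici 0) := by
  intro s (hs : 0 ≤ s) t (ht : 0 ≤ t) hst
  rw [saturation, saturation, div_le_div_iff₀ (by linarith) (by linarith)]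
  linarith

lemma mul_saturation_le_saturation_mul {r t : ℝ} (hr₀ : 0 ≤ r) (hr₁ : r ≤ 1) (ht : 0 ≤ t) :
    r * saturation t ≤ saturation (r * t) := by
  have hrt : 0 ≤ r * t := mul_nonneg hr₀ ht
  rw [saturation, saturation, ← mul_div_assoc]
  exact div_le_div_of_nonneg_left hrt (by linarith)
    (add_le_add_right (mul_le_of_le_one_left ht hr₁) 1)

lemma half_mul_saturation_le_saturation_midpoint {b₁ b₂ y₁ y₂ w : ℝ} (h₂ : y₂ ≤ b₂) (h₂₁ : b₂ ≤ y₁)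
    (h₁ : y₁ ≤ b₁) (hw : 0 ≤ w) :
    1 / 2 * saturation ((b₁ - y₂) * w) ≤
      saturation ((midpoint ℝ b₁ y₁ - midpoint ℝ b₂ y₂) * w) := by
  have hgap : 0 ≤ (b₁ - y₂) * w := mul_nonneg (by linarith) hw
  have hmid : 1 / 2 * (b₁ - y₂) ≤ midpoint ℝ b₁ y₁ - midpoint ℝ b₂ y₂ := by
    simp only [midpoint_eq_smul_add, invOf_eq_inv, smul_eq_mul]
    linarith
  have hle : 1 / 2 * ((b₁ - y₂) * w) ≤ (midpoint ℝ b₁ y₁ - midpoint ℝ b₂ y₂) * w := by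
    rw [← mul_assoc]
    exact mul_le_mul_of_nonneg_right hmid hw
  have hhalf : 0 ≤ 1 / 2 * ((b₁ - y₂) * w) := mul_nonneg one_half_pos.le hgap
  calc 1 / 2 * saturation ((b₁ - y₂) * w)
      ≤ saturation (1 / 2 * ((b₁ - y₂) * w)) :=
        mul_saturation_le_saturation_mul one_half_pos.le one_half_lt_one.le hgap
    _ ≤ saturation ((midpoint ℝ b₁ y₁ - midpoint ℝ b₂ y₂) * w) :=
        monotoneOn_saturation hhalf (hhalf.trans hle) hle

lemma continuousOn_saturation : ContinuousOn saturation (Set.Ici 0) := by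
  refine continuousOn_id.div (by fun_prop) fun t (ht : 0 ≤ t) => ?_
  linarith

end Saturation

section Integration

lemma prod_intervalIntegral_eq_setIntegral_Icc {ι 𝕜 : Type*} [Fintype ι] [RCLike 𝕜] {a b : ι → ℝ}
    (hab : a ≤ b) (f : ι → ℝ → 𝕜) :
    ∏ k, ∫ t in a k..b k, f k t = ∫ y in Set.Icc a b, ∏ k, f k (y k) := by
  rw [← Set.pi_univ_Icc, volume_pi, Measure.restrict_pi_pi, integral_fintype_prod_eq_prod]
  refine prod_congr rfl fun k _ => ?_
  rw [intervalIntegral.integral_of_le (hab k), integral_Icc_eq_integral_Ioc]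

variable {E : Type*} [NormedAddCommGroup E] [NormedSpace ℝ E] [FiniteDimensional ℝ E]
  [MeasurableSpace E] [BorelSpace E] {μ : Measure E} [μ.IsAddHaarMeasure] {s : Set E} {b : E}

lemma setIntegral_image_homothety {F : Type*} [NormedAddCommGroup F] [NormedSpace ℝ F]
    (hs : MeasurableSet s) (b : E) {r : ℝ} (hr : r ≠ 0) (f : E → F) :
    ∫ y in AffineMap.homothety b r '' s, f y ∂μ =
      |r| ^ Module.finrank ℝ E • ∫ y in s, f (AffineMap.homothety b r y) ∂μ := by
  have hderiv : ∀ y ∈ s, HasFDerivWithinAt (AffineMap.homothety b r)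
      (r • ContinuousLinearMap.id ℝ E) s y := by
    intro y _
    have hderivAt := (((hasFDerivAt_id (𝕜 := ℝ) y).sub_const b).const_smul r).add_const b
    exact hderivAt.hasFDerivWithinAt
  have hinj : Function.Injective (AffineMap.homothety b r : E →ᵃ[ℝ] E) := fun y z hyz => by
    simpa [AffineMap.homothety_apply, hr] using hyz
  rw [integral_image_eq_integral_abs_det_fderiv_smul μ hs hderiv hinj.injOn, ← integral_smul]
  simp [ContinuousLinearMap.det, abs_pow]

lemma setIntegral_comp_homothety_le_of_starConvex (hs : MeasurableSet s) (hsb : StarConvex ℝ b s)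
    {r : ℝ} (hr₀ : 0 < r) (hr₁ : r ≤ 1) {f : E → ℝ} (hf : IntegrableOn f s μ)
    (hf₀ : ∀ y ∈ s, 0 ≤ f y) :
    r ^ Module.finrank ℝ E * ∫ y in s, f (AffineMap.homothety b r y) ∂μ ≤ ∫ y in s, f y ∂μ := by
  have himage := setIntegral_image_homothety (μ := μ) hs b hr₀.ne' f
  rw [abs_of_pos hr₀, smul_eq_mul] at himage
  rw [← himage]
  refine setIntegral_mono_set hf (ae_restrict_of_forall_mem hs hf₀) (Filter.Eventually.of_forall ?_)
  rintro _ ⟨y, hy, rfl⟩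
  change AffineMap.homothety b r y ∈ s
  simpa [AffineMap.homothety_apply, add_comm] using hsb.add_smul_sub_mem hy hr₀.le hr₁

end Integration

section Densities

lemma apply_le_apply_of_mem_Icc {ι α : Type*} [LT ι] [Preorder α] {a b y : ι → α}
    (hba : ∀ i j, i < j → b j ≤ a i) (hy : y ∈ Set.Icc a b) (i j : ι) (hij : i < j) : y j ≤ y i :=
  (hy.2 j).trans ((hba i j hij).trans (hy.1 i))

/-- The density `e^{-∑ₖ cₖ(bₖ - yₖ)} ∏_{i<j} saturation ((zᵢ - yⱼ) wᵢⱼ)` on a box with upper corner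
`b`. Taking `z = y` gives the integrand of `Iint`, taking `z = b` the product of the integrands of
the `Ifac`. -/
noncomputable def boxDensity {ι : Type*} [Fintype ι] [Preorder ι] [LocallyFiniteOrderTop ι]
    (c : ι → ℝ) (w : ι → ι → ℝ) (b z y : ι → ℝ) : ℝ :=
  Real.exp (-∑ k, c k * (b k - y k)) * ∏ i, ∏ j ∈ Ioi i, saturation ((z i - y j) * w i j)

/-- The factor of `boxDensity c w b b` which depends on the `k`-th variable only. -/
noncomputable def factorDensity {ι : Type*} [Preorder ι] [LocallyFiniteOrderBot ι]
    (c : ι → ℝ) (w : ι → ι → ℝ) (b : ι → ℝ) (k : ι) (t : ℝ) : ℝ :=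
  Real.exp (-c k * (b k - t)) * ∏ j ∈ Iio k, saturation ((b j - t) * w j k)

variable {ι : Type*} [Fintype ι] [Preorder ι] [LocallyFiniteOrderTop ι]
  {c : ι → ℝ} {w : ι → ι → ℝ} {a b y z : ι → ℝ}

lemma prod_factorDensity [LocallyFiniteOrderBot ι] (c : ι → ℝ) (w : ι → ι → ℝ) (b y : ι → ℝ) :
    ∏ k, factorDensity c w b k (y k) = boxDensity c w b b y := by
  have hswap : ∏ k, ∏ j ∈ Iio k, saturation ((b j - y k) * w j k) =
      ∏ j, ∏ k ∈ Ioi j, saturation ((b j - y k) * w j k) := prod_comm' (by simp)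
  simp only [factorDensity, boxDensity, prod_mul_distrib, hswap, ← Real.exp_sum, neg_mul,
    sum_neg_distrib]

lemma boxDensity_nonneg (hw : ∀ i j, i < j → 0 ≤ w i j) (hyz : ∀ i j, i < j → y j ≤ z i) :
    0 ≤ boxDensity c w b z y := by
  refine mul_nonneg (Real.exp_nonneg _) (prod_nonneg fun i _ => prod_nonneg fun j hj => ?_)
  have hij := mem_Ioi.1 hj
  exact saturation_nonneg (mul_nonneg (sub_nonneg.2 (hyz i j hij)) (hw i j hij))

lemma boxDensity_le_boxDensity {z' : ι → ℝ} (hw : ∀ i j, i < j → 0 ≤ w i j)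
    (hyz : ∀ i j, i < j → y j ≤ z i) (hzz' : z ≤ z') :
    boxDensity c w b z y ≤ boxDensity c w b z' y := by
  have hz : ∀ i, ∀ j ∈ Ioi i, 0 ≤ (z i - y j) * w i j := fun i j hj =>
    mul_nonneg (sub_nonneg.2 (hyz i j (mem_Ioi.1 hj))) (hw i j (mem_Ioi.1 hj))
  refine mul_le_mul_of_nonneg_left ?_ (Real.exp_nonneg _)
  refine prod_le_prod (fun i _ => prod_nonneg fun j hj => saturation_nonneg (hz i j hj)) fun i _ =>
    prod_le_prod (fun j hj => saturation_nonneg (hz i j hj)) fun j hj => ?_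
  have hle : (z i - y j) * w i j ≤ (z' i - y j) * w i j :=
    mul_le_mul_of_nonneg_right (sub_le_sub_right (hzz' i) _) (hw i j (mem_Ioi.1 hj))
  exact monotoneOn_saturation (hz i j hj) ((hz i j hj).trans hle) hle

lemma half_pow_mul_boxDensity_le_boxDensity_midpoint (hc : 0 ≤ c)
    (hw : ∀ i j, i < j → 0 ≤ w i j) (hyb : y ≤ b) (hby : ∀ i j, i < j → b j ≤ y i) :
    (1 / 2) ^ (∑ i : ι, #(Ioi i)) * boxDensity c w b b y ≤
      boxDensity c w b (midpoint ℝ b y) (midpoint ℝ b y) := by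
  have hpair_nonneg : ∀ i, ∀ j ∈ Ioi i, 0 ≤ 1 / 2 * saturation ((b i - y j) * w i j) := by
    intro i j hj
    have hij := mem_Ioi.1 hj
    have hgap : 0 ≤ b i - y j := sub_nonneg.2 ((hyb j).trans ((hby i j hij).trans (hyb i)))
    exact mul_nonneg one_half_pos.le (saturation_nonneg (mul_nonneg hgap (hw i j hij)))
  have hpair : ∀ i, ∀ j ∈ Ioi i, 1 / 2 * saturation ((b i - y j) * w i j) ≤
      saturation ((midpoint ℝ b y i - midpoint ℝ b y j) * w i j) := by
    intro i j hj
    have hij := mem_Ioi.1 hj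
    simpa only [pi_midpoint_apply] using
      half_mul_saturation_le_saturation_midpoint (hyb j) (hby i j hij) (hyb i) (hw i j hij)
  have hexp : -∑ k, c k * (b k - y k) ≤ -∑ k, c k * (b k - midpoint ℝ b y k) := by
    gcongr with k
    · exact hc k
    · simpa only [pi_midpoint_apply] using right_le_midpoint.2 (hyb k)
  have hprod : (1 / 2) ^ (∑ i : ι, #(Ioi i)) * ∏ i, ∏ j ∈ Ioi i, saturation ((b i - y j) * w i j) =
      ∏ i, ∏ j ∈ Ioi i, 1 / 2 * saturation ((b i - y j) * w i j) := by
    simp only [prod_mul_distrib, prod_const, prod_pow_eq_pow_sum]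
  rw [boxDensity, mul_left_comm, hprod]
  exact mul_le_mul (Real.exp_le_exp.2 hexp)
    (prod_le_prod (fun i _ => prod_nonneg (hpair_nonneg i)) fun i _ =>
      prod_le_prod (hpair_nonneg i) (hpair i))
    (prod_nonneg fun i _ => prod_nonneg (hpair_nonneg i)) (Real.exp_nonneg _)

lemma continuousOn_boxDensity {s : Set (ι → ℝ)} {g : (ι → ℝ) → ι → ℝ} (hg : ContinuousOn g s)
    (hw : ∀ i j, i < j → 0 ≤ w i j) (hyg : ∀ y ∈ s, ∀ i j, i < j → y j ≤ g y i) :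
    ContinuousOn (fun y => boxDensity c w b (g y) y) s := by
  refine ContinuousOn.mul (by fun_prop) (continuousOn_finsetProd _ fun i _ =>
    continuousOn_finsetProd _ fun j hj => ?_)
  have hij := mem_Ioi.1 hj
  exact continuousOn_saturation.comp (by fun_prop) fun y hy =>
    mul_nonneg (sub_nonneg.2 (hyg y hy i j hij)) (hw i j hij)

lemma continuousOn_boxDensity_self (hw : ∀ i j, i < j → 0 ≤ w i j)
    (hba : ∀ i j, i < j → b j ≤ a i) :
    ContinuousOn (fun y => boxDensity c w b y y) (Set.Icc a b) :=
  continuousOn_boxDensity continuousOn_id hw fun _ hy => apply_le_apply_of_mem_Icc hba hy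

lemma continuousOn_boxDensity_upper (hw : ∀ i j, i < j → 0 ≤ w i j)
    (hba : ∀ i j, i < j → b j ≤ a i) :
    ContinuousOn (boxDensity c w b b) (Set.Icc a b) :=
  continuousOn_boxDensity continuousOn_const hw fun _ hy i j hij =>
    (apply_le_apply_of_mem_Icc hba hy i j hij).trans (hy.2 i)

lemma setIntegral_boxDensity_self_le (hw : ∀ i j, i < j → 0 ≤ w i j)
    (hba : ∀ i j, i < j → b j ≤ a i) :
    ∫ y in Set.Icc a b, boxDensity c w b y y ≤ ∫ y in Set.Icc a b, boxDensity c w b b y :=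
  setIntegral_mono_on (continuousOn_boxDensity_self hw hba).integrableOn_Icc
    (continuousOn_boxDensity_upper hw hba).integrableOn_Icc measurableSet_Icc fun _ hy =>
      boxDensity_le_boxDensity hw (apply_le_apply_of_mem_Icc hba hy) hy.2

lemma half_pow_mul_setIntegral_boxDensity_le (hc : 0 ≤ c) (hw : ∀ i j, i < j → 0 ≤ w i j)
    (hab : a ≤ b) (hba : ∀ i j, i < j → b j ≤ a i) :
    (1 / 2) ^ (Fintype.card ι + ∑ i : ι, #(Ioi i)) * ∫ y in Set.Icc a b, boxDensity c w b b y ≤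
      ∫ y in Set.Icc a b, boxDensity c w b y y := by
  have hb : b ∈ Set.Icc a b := ⟨hab, le_rfl⟩
  have hself := continuousOn_boxDensity_self (c := c) hw hba
  have hmidpoint : Continuous (midpoint ℝ b) :=
    (AffineMap.homothety_continuous b (1 / 2 : ℝ)).congr (homothety_one_half b)
  have hmid : ContinuousOn
      (fun y => boxDensity c w b (midpoint ℝ b y) (midpoint ℝ b y)) (Set.Icc a b) :=
    hself.comp hmidpoint.continuousOn fun _ hy => (convex_Icc a b).midpoint_mem hb hy
  have hpointwise :
      (1 / 2) ^ (∑ i : ι, #(Ioi i)) * ∫ y in Set.Icc a b, boxDensity c w b b y ≤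
        ∫ y in Set.Icc a b, boxDensity c w b (midpoint ℝ b y) (midpoint ℝ b y) := by
    rw [← integral_const_mul]
    exact setIntegral_mono_on
      ((continuousOn_boxDensity_upper hw hba).integrableOn_Icc.const_mul _)
      hmid.integrableOn_Icc measurableSet_Icc fun y hy =>
        half_pow_mul_boxDensity_le_boxDensity_midpoint hc hw hy.2 fun i j hij =>
          (hba i j hij).trans (hy.1 i)
  have hsubst := setIntegral_comp_homothety_le_of_starConvex (μ := volume) measurableSet_Icc
    ((convex_Icc a b).starConvex hb) one_half_pos one_half_lt_one.le hself.integrableOn_Icc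
    fun y hy => boxDensity_nonneg hw (apply_le_apply_of_mem_Icc hba hy)
  simp only [Module.finrank_fintype_fun_eq_card, homothety_one_half] at hsubst
  rw [pow_add, mul_assoc]
  exact (mul_le_mul_of_nonneg_left hpointwise (by positivity)).trans hsubst

end Densities

theorem approx_factorization_general {ι : Type*} [Fintype ι] [Preorder ι]
    [LocallyFiniteOrderTop ι] [LocallyFiniteOrderBot ι] {c : ι → ℝ} {w : ι → ι → ℝ} {a b : ι → ℝ}
    (hc : 0 ≤ c) (hw : ∀ i j, i < j → 0 ≤ w i j) (hab : a ≤ b)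
    (hba : ∀ i j, i < j → b j ≤ a i) :
    (1 / 2) ^ (Fintype.card ι + ∑ i : ι, #(Ioi i)) *
        ∏ k, ∫ t in a k..b k, factorDensity c w b k t ≤
      ∫ y in Set.Icc a b, boxDensity c w b y y ∧
    ∫ y in Set.Icc a b, boxDensity c w b y y ≤
      ∏ k, ∫ t in a k..b k, factorDensity c w b k t := by
  simp only [prod_intervalIntegral_eq_setIntegral_Icc hab, prod_factorDensity]
  exact ⟨half_pow_mul_setIntegral_boxDensity_le hc hw hab hba,
    setIntegral_boxDensity_self_le hw hba⟩

/-- Approximate factorization: `I⁽ⁿ⁾(λ;x) ≍ ∏_{k=1}^n I_k⁽ⁿ⁾(λ;x)` for weakly decreasing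
`λ, x ∈ ℝ^{n+1}`, with constants depending only on `n`. -/
theorem approx_factorization (n : ℕ) (hn : 1 ≤ n) :
    ∃ C₁ C₂ : ℝ, 0 < C₁ ∧ 0 < C₂ ∧
      ∀ lam x : Fin (n + 1) → ℝ, Antitone lam → Antitone x →
        C₁ * (∏ k : Fin n, Ifac n lam x k) ≤ Iint n lam x ∧
        Iint n lam x ≤ C₂ * (∏ k : Fin n, Ifac n lam x k) := by
  refine ⟨(1 / 2) ^ (Fintype.card (Fin n) + ∑ i : Fin n, #(Ioi i)), 1, by positivity, one_pos,
    fun lam x hlam hx => ?_⟩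
  simpa only [one_mul, Iint, Ifac, boxDensity, factorDensity, saturation] using
    approx_factorization_general
      (c := fun k => lam k.castSucc - lam (Fin.last n))
      (w := fun i j => lam i.castSucc - lam j.castSucc)
      (fun k => sub_nonneg.2 (hlam (Fin.le_last _)))
      (fun i j hij => sub_nonneg.2 (hlam (Fin.castSucc_le_castSucc_iff.2 hij.le)))
      (fun k => hx Fin.castSucc_lt_succ.le)
      (fun i j hij => hx (Fin.succ_le_castSucc_iff.2 hij))
end

section
/- (Recursive estimate) For every n ≥ 1 there exist constants C₁, C₂ > 0 depending only on n such that for all weakly decreasing λ, x ∈ ℝ^{n+2} with x_1 − x_2 ≥ x_{n+1} − x_{n+2}, one has C₁·P ≤ I⁽ⁿ⁺¹⁾(λ;x) · I⁽ⁿ⁻¹⁾(λ_2,…,λ_n,λ_{n+2}; x_2,…,x_{n+1}) ≤ C₂·P, where P = I⁽ⁿ⁾(λ_1,…,λ_n,λ_{n+2}; x_1,…,x_{n+1}) · [(x_1−x_{n+1})(λ_1−λ_{n+1})/(1+(x_1−x_{n+1})(λ_1−λ_{n+1}))] · I⁽ⁿ⁾(λ_2,…,λ_{n+1},λ_{n+2};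 x_2,…,x_{n+2}). -/
open Finset MeasureTheory

/-!
The exponential confines `y_k` to a window of length comparable with
`s_k = min (x_k - x_{k+1}) (λ_k - λ_{n+1})⁻¹` below `x_k`. Replacing `y_i - y_j` by
`x_i - x_j + s_j` in the product therefore changes the integral only by a bounded factor, and the
integral becomes `∏ s_i · ∏_{i<j} sat ((x_i - x_j + s_j) (λ_i - λ_j))`. For fixed `i`, the shift by
`s_j` in the `j`-th factor can be traded for enlarging `x_i - x_j` to `x_i - x_{j+1}` in the length
`min (x_i - x_j) (λ_i - λ_{n+1})⁻¹`; telescoping over `j` shows that `I⁽ⁿ⁾` is comparable with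
`∏_i min (x_i - x_{n+1}) (λ_i - λ_{n+1})⁻¹ · ∏_{i<j} sat ((x_i - x_j) (λ_i - λ_j))`.
For these closed forms the two sides of the recursion agree up to a single factor, the length
belonging to `i = 1`, which is computed with `x_1 - x_{n+2}` on one side and with `x_1 - x_{n+1}`
on the other.
-/

open Asymptotics Filter

/-- The saturation function `u ↦ u / (1 + u)`, through which each pair of variables enters the
integrand of `Iint`. -/
noncomputable def sat (u : ℝ) : ℝ := u / (1 + u)

/-- A rational substitute for `min b μ⁻¹`, comparable with it for `b, μ ≥ 0` and equal to `b` at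
`μ = 0`. -/
noncomputable def ramp (μ b : ℝ) : ℝ := b / (1 + μ * b)

section SatRamp

variable {μ a b c l t u v : ℝ}

lemma sat_eq_ramp_one (u : ℝ) : sat u = ramp 1 u := by rw [sat, ramp, one_mul]

lemma ramp_nonneg (hμ : 0 ≤ μ) (hb : 0 ≤ b) : 0 ≤ ramp μ b := by
  unfold ramp; positivity

lemma sat_nonneg (hu : 0 ≤ u) : 0 ≤ sat u := by
  unfold sat; positivity

lemma ramp_le_mul_ramp (hμ : 0 ≤ μ) (hc : 1 ≤ c) (ha : 0 ≤ a) (hab : a ≤ c * b) :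
    ramp μ a ≤ c * ramp μ b := by
  have hb : 0 ≤ b := nonneg_of_mul_nonneg_right (ha.trans hab) (by linarith)
  unfold ramp
  rw [← mul_div_assoc, div_le_div_iff₀ (by positivity) (by positivity)]
  calc a * (1 + μ * b) = a + 1 * (μ * a * b) := by ring
    _ ≤ c * b + c * (μ * a * b) := by gcongr
    _ = c * b * (1 + μ * a) := by ring

lemma sat_le_mul_sat (hc : 1 ≤ c) (hu : 0 ≤ u) (huv : u ≤ c * v) : sat u ≤ c * sat v := by
  simpa only [sat_eq_ramp_one] using ramp_le_mul_ramp zero_le_one hc hu huv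

lemma ramp_le (hμ : 0 ≤ μ) (hb : 0 ≤ b) : ramp μ b ≤ b :=
  div_le_self hb (le_add_of_nonneg_right (mul_nonneg hμ hb))

lemma mul_ramp_le_one (hμ : 0 ≤ μ) (hb : 0 ≤ b) : μ * ramp μ b ≤ 1 := by
  unfold ramp
  rw [← mul_div_assoc, div_le_one (by positivity)]
  linarith

lemma le_ramp_mul (hμ : 0 ≤ μ) (ht : 0 ≤ t) (htb : t ≤ b) : t ≤ ramp μ b * (1 + μ * t) := by
  have hb : 0 ≤ b := ht.trans htb
  unfold ramp
  rw [div_mul_eq_mul_div, le_div_iff₀ (by positivity)]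
  calc t * (1 + μ * b) = t + μ * b * t := by ring
    _ ≤ b + μ * b * t := by gcongr
    _ = b * (1 + μ * t) := by ring

lemma sat_add_ramp_mul (ha : 0 ≤ a) (hb : 0 ≤ b) (hl : 0 ≤ l) (hμ : 0 ≤ μ) :
    sat ((a + ramp μ b) * l) =
      (a + b + a * b * μ) * l / (1 + μ * b + (a + b + a * b * μ) * l) := by
  have hnum : a + ramp μ b = (a + b + a * b * μ) / (1 + μ * b) := by
    unfold ramp; field_simp; ring
  rw [sat, hnum]
  field_simp

-- Once denominators are cleared, this inequality and the next one hold coefficientwise between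
-- polynomials with nonnegative coefficients.
lemma ramp_mul_sat_add_ramp_le (ha : 0 ≤ a) (hb : 0 ≤ b) (hl : 0 ≤ l) (hμ : 0 ≤ μ) :
    ramp (l + μ) a * sat ((a + ramp μ b) * l) ≤ 4 * (ramp (l + μ) (a + b) * sat (a * l)) := by
  rw [sat_add_ramp_mul ha hb hl hμ]
  unfold ramp sat
  rw [div_mul_div_comm, div_mul_div_comm, ← mul_div_assoc,
    div_le_div_iff₀ (by positivity) (by positivity), ← sub_nonneg]
  ring_nf
  positivity

lemma ramp_add_mul_sat_le (ha : 0 ≤ a) (hb : 0 ≤ b) (hl : 0 ≤ l) (hμ : 0 ≤ μ) :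
    ramp (l + μ) (a + b) * sat (a * l) ≤ 4 * (ramp (l + μ) a * sat ((a + ramp μ b) * l)) := by
  rw [sat_add_ramp_mul ha hb hl hμ]
  unfold ramp sat
  rw [div_mul_div_comm, div_mul_div_comm, ← mul_div_assoc,
    div_le_div_iff₀ (by positivity) (by positivity), ← sub_nonneg]
  ring_nf
  positivity

lemma integral_inv_one_add_mul_sq (hμ : 0 ≤ μ) (hab : a ≤ b) :
    ∫ y in Set.Icc a b, ((1 + μ * (b - y)) ^ 2)⁻¹ = ramp μ (b - a) := by
  have hpos : ∀ y ∈ Set.uIcc a b, 0 < 1 + μ * (b - y) := fun y hy => by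
    rw [Set.uIcc_of_le hab] at hy
    have := mul_nonneg hμ (sub_nonneg.2 hy.2)
    linarith
  have hderiv : ∀ y ∈ Set.uIcc a b,
      HasDerivAt (fun y => -ramp μ (b - y)) ((1 + μ * (b - y)) ^ 2)⁻¹ y := fun y hy => by
    have hsub : HasDerivAt (fun y => b - y) (-1) y := (hasDerivAt_id y).const_sub b
    have hden := (hsub.const_mul μ).const_add 1
    have hne := (hpos y hy).ne'
    refine (hsub.div hden hne).neg.congr_deriv ?_
    field_simp
    ring
  have hcont : ContinuousOn (fun y => ((1 + μ * (b - y)) ^ 2)⁻¹) (Set.uIcc a b) :=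
    ContinuousOn.inv₀ (by fun_prop) fun y hy => pow_ne_zero _ (hpos y hy).ne'
  rw [integral_Icc_eq_integral_Ioc, ← intervalIntegral.integral_of_le hab,
    intervalIntegral.integral_eq_sub_of_hasDerivAt hderiv hcont.intervalIntegrable]
  simp [ramp]

lemma one_add_pow_mul_exp_neg_le (N : ℕ) (hu : 0 ≤ u) :
    (1 + u) ^ N * Real.exp (-u) ≤ Real.exp 1 * (N + 2).factorial * ((1 + u) ^ 2)⁻¹ := by
  have h := Real.pow_div_factorial_le_exp (1 + u) (by positivity) (N + 2)
  rw [div_le_iff₀ (by positivity), Real.exp_add, pow_add] at h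
  rw [Real.exp_neg, ← div_eq_mul_inv, ← div_eq_mul_inv,
    div_le_div_iff₀ (by positivity) (by positivity)]
  linarith

end SatRamp

section General

lemma isBigO_principal_of_nonneg {α : Type*} {s : Set α} {f g : α → ℝ} {c : ℝ}
    (hf : ∀ p ∈ s, 0 ≤ f p) (hg : ∀ p ∈ s, 0 ≤ g p) (h : ∀ p ∈ s, f p ≤ c * g p) :
    f =O[𝓟 s] g :=
  isBigO_principal.2 ⟨c, fun p hp => by
    rw [Real.norm_of_nonneg (hf p hp), Real.norm_of_nonneg (hg p hp)]
    exact h p hp⟩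

lemma exists_forall_le_mul_of_isBigO_principal {α : Type*} {s : Set α} {f g : α → ℝ}
    (h : f =O[𝓟 s] g) (hg : ∀ p ∈ s, 0 ≤ g p) : ∃ C > 0, ∀ p ∈ s, f p ≤ C * g p := by
  obtain ⟨C, hC, hle⟩ := h.exists_pos
  refine ⟨C, hC, fun p hp => (le_abs_self _).trans ?_⟩
  simpa only [Real.norm_eq_abs, abs_of_nonneg (hg p hp)] using isBigOWith_principal.1 hle p hp

lemma isTheta_principal_comp {α β : Type*} {s : Set α} {t : Set β} {𝕜 : Type*} [NormedField 𝕜]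
    {f g : β → 𝕜} {φ : α → β}
    (hφ : Set.MapsTo φ s t) (h : f =Θ[𝓟 t] g) :
    (fun p => f (φ p)) =Θ[𝓟 s] fun p => g (φ p) :=
  have hφ : Tendsto φ (𝓟 s) (𝓟 t) := tendsto_principal_principal.2 hφ
  ⟨h.1.comp_tendsto hφ, h.2.comp_tendsto hφ⟩

lemma isTheta_mul_prod_of_telescope {α : Type*} {F : Filter α} {𝕜 : Type*} [NormedField 𝕜] {n : ℕ}
    {r : Fin (n + 1) → α → 𝕜} {f g : Fin n → α → 𝕜}
    (h : ∀ j, (fun p => r j.castSucc p * f j p) =Θ[F] fun p => r j.succ p * g j p) :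
    (fun p => r 0 p * ∏ j, f j p) =Θ[F] fun p => r (Fin.last n) p * ∏ j, g j p := by
  induction n with
  | zero => simpa using isTheta_rfl
  | succ n ih =>
    have htail := ih (r := fun j => r j.succ) fun j => h j.succ
    simp only [Fin.prod_univ_succ]
    calc (fun p => r 0 p * (f 0 p * ∏ j : Fin n, f j.succ p))
        = fun p => r 0 p * f 0 p * ∏ j : Fin n, f j.succ p := by simp only [mul_assoc]
      _ =Θ[F] fun p => r 1 p * g 0 p * ∏ j : Fin n, f j.succ p := (h 0).mul isTheta_rfl
      _ = fun p => g 0 p * (r 1 p * ∏ j : Fin n, f j.succ p) := by ext; ring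
      _ =Θ[F] fun p => g 0 p * (r (Fin.last (n + 1)) p * ∏ j : Fin n, g j.succ p) :=
        isTheta_rfl.mul htail
      _ = fun p => r (Fin.last (n + 1)) p * (g 0 p * ∏ j : Fin n, g j.succ p) := by ext; ring

lemma setIntegral_Icc_pi_prod {ι : Type*} [Fintype ι] (a b : ι → ℝ) (f : ι → ℝ → ℝ) :
    ∫ y in Set.Icc a b, ∏ k, f k (y k) = ∏ k, ∫ t in Set.Icc (a k) (b k), f k t := by
  rw [← Set.pi_univ_Icc, volume_pi, Measure.restrict_pi_pi, integral_fintype_prod_eq_prod]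

lemma antitone_tail {α : Type*} [Preorder α] {n : ℕ} {v : Fin (n + 1) → α} (hv : Antitone v) :
    Antitone (Fin.tail v) :=
  hv.comp_monotone Fin.strictMono_succ.monotone

lemma antitone_init {α : Type*} [Preorder α] {n : ℕ} {v : Fin (n + 1) → α} (hv : Antitone v) :
    Antitone (Fin.init v) :=
  hv.comp_monotone Fin.strictMono_castSucc.monotone

lemma ramp_mul_sat_isTheta {α : Type*} {s : Set α} {a b l μ : α → ℝ} (ha : ∀ p ∈ s, 0 ≤ a p)
    (hb : ∀ p ∈ s, 0 ≤ b p) (hl : ∀ p ∈ s, 0 ≤ l p) (hμ : ∀ p ∈ s, 0 ≤ μ p) :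
    (fun p => ramp (l p + μ p) (a p) * sat ((a p + ramp (μ p) (b p)) * l p)) =Θ[𝓟 s]
      fun p => ramp (l p + μ p) (a p + b p) * sat (a p * l p) := by
  have hleft : ∀ p ∈ s, 0 ≤ ramp (l p + μ p) (a p) * sat ((a p + ramp (μ p) (b p)) * l p) :=
    fun p hp => mul_nonneg (ramp_nonneg (add_nonneg (hl p hp) (hμ p hp)) (ha p hp))
      (sat_nonneg (mul_nonneg (add_nonneg (ha p hp) (ramp_nonneg (hμ p hp) (hb p hp))) (hl p hp)))
  have hright : ∀ p ∈ s, 0 ≤ ramp (l p + μ p) (a p + b p) * sat (a p * l p) :=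
    fun p hp => mul_nonneg
      (ramp_nonneg (add_nonneg (hl p hp) (hμ p hp)) (add_nonneg (ha p hp) (hb p hp)))
      (sat_nonneg (mul_nonneg (ha p hp) (hl p hp)))
  exact ⟨isBigO_principal_of_nonneg hleft hright fun p hp =>
      ramp_mul_sat_add_ramp_le (ha p hp) (hb p hp) (hl p hp) (hμ p hp),
    isBigO_principal_of_nonneg hright hleft fun p hp =>
      ramp_add_mul_sat_le (ha p hp) (hb p hp) (hl p hp) (hμ p hp)⟩

end General

/-- The product `∏_{i<j} sat ((u_i - v_j) (λ_i - λ_j))`. The integrand of `Iint` has `u = v = y`;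
distinct `u` and `v` allow for the shifted differences `x_i - x_j + s_j`. -/
noncomputable def satProd {n : ℕ} (lam u v : Fin n → ℝ) : ℝ :=
  ∏ i, ∏ j ∈ Ioi i, sat ((u i - v j) * (lam i - lam j))

/-- The factors of `satProd` with `i = 0`. -/
noncomputable def satRow {n : ℕ} (lam u v : Fin (n + 1) → ℝ) : ℝ :=
  ∏ j : Fin n, sat ((u 0 - v j.succ) * (lam 0 - lam j.succ))

section SatProd

variable {n : ℕ}

lemma satProd_succ (lam u v : Fin (n + 1) → ℝ) :
    satProd lam u v = satRow lam u v * satProd (Fin.tail lam) (Fin.tail u) (Fin.tail v) := by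
  unfold satProd
  rw [Fin.prod_univ_succ, Fin.prod_Ioi_zero]
  simp only [Fin.prod_Ioi_succ]
  rfl

lemma satRow_succ (lam u v : Fin (n + 2) → ℝ) :
    satRow lam u v = satRow (Fin.init lam) (Fin.init u) (Fin.init v) *
      sat ((u 0 - v (Fin.last (n + 1))) * (lam 0 - lam (Fin.last (n + 1)))) :=
  Fin.prod_univ_castSucc _

variable {lam u v u' v' c : Fin n → ℝ}

lemma satProd_nonneg (hl : Antitone lam) (huv : ∀ i j, i < j → v j ≤ u i) :
    0 ≤ satProd lam u v :=
  prod_nonneg fun i _ => prod_nonneg fun j hj =>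
    sat_nonneg (mul_nonneg (sub_nonneg.2 (huv i j (mem_Ioi.1 hj)))
      (sub_nonneg.2 (hl (mem_Ioi.1 hj).le)))

lemma satProd_le_mul_satProd (hl : Antitone lam) (hc : ∀ j, 1 ≤ c j)
    (huv : ∀ i j, i < j → v j ≤ u i)
    (hle : ∀ i j, i < j → u i - v j ≤ c j * (u' i - v' j)) :
    satProd lam u v ≤ (∏ j, c j) ^ n * satProd lam u' v' := by
  have hc0 : ∀ j, 0 ≤ c j := fun j => zero_le_one.trans (hc j)
  have hlam : ∀ {i j}, i < j → 0 ≤ lam i - lam j := fun hij => sub_nonneg.2 (hl hij.le)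
  have hnonneg : ∀ i, ∀ j ∈ Ioi i, 0 ≤ sat ((u i - v j) * (lam i - lam j)) := fun i j hj =>
    have hij := mem_Ioi.1 hj
    sat_nonneg (mul_nonneg (sub_nonneg.2 (huv i j hij)) (hlam hij))
  have hfactor : ∀ i, ∀ j ∈ Ioi i, sat ((u i - v j) * (lam i - lam j)) ≤
      c j * sat ((u' i - v' j) * (lam i - lam j)) := fun i j hj => by
    have hij := mem_Ioi.1 hj
    refine sat_le_mul_sat (hc j) (mul_nonneg (sub_nonneg.2 (huv i j hij)) (hlam hij)) ?_
    rw [← mul_assoc]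
    exact mul_le_mul_of_nonneg_right (hle i j hij) (hlam hij)
  have hsat' : 0 ≤ satProd lam u' v' := satProd_nonneg hl fun i j hij => sub_nonneg.1 <|
    nonneg_of_mul_nonneg_right ((sub_nonneg.2 (huv i j hij)).trans (hle i j hij))
      (zero_lt_one.trans_le (hc j))
  calc satProd lam u v
      ≤ ∏ i, ∏ j ∈ Ioi i, c j * sat ((u' i - v' j) * (lam i - lam j)) :=
        prod_le_prod (fun i _ => prod_nonneg (hnonneg i)) fun i _ =>
          prod_le_prod (hnonneg i) (hfactor i)
    _ = (∏ i, ∏ j ∈ Ioi i, c j) * satProd lam u' v' := by simp only [prod_mul_distrib, satProd]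
    _ ≤ (∏ _i : Fin n, ∏ j, c j) * satProd lam u' v' := by
        refine mul_le_mul_of_nonneg_right (prod_le_prod (fun i _ => prod_nonneg fun j _ => hc0 j)
          fun i _ => ?_) hsat'
        exact prod_le_prod_of_subset_of_one_le (subset_univ _) (fun j _ => hc0 j)
          fun j _ _ => hc j
    _ = (∏ j, c j) ^ n * satProd lam u' v' := by rw [prod_const, card_univ, Fintype.card_fin]

end SatProd

/-- The rate `λ_k - λ_{n+1}` at which the integrand of `Iint` decays in `x_k - y_k`. -/
def rate {n : ℕ} (lam : Fin (n + 1) → ℝ) (k : Fin n) : ℝ := lam k.castSucc - lam (Fin.last n)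

/-- The length `s_k ≈ min (x_k - x_{k+1}) (λ_k - λ_{n+1})⁻¹` of the window below `x_k` on which the
`k`-th variable of `Iint` concentrates. -/
noncomputable def scale {n : ℕ} (lam x : Fin (n + 1) → ℝ) (k : Fin n) : ℝ :=
  ramp (rate lam k) (x k.castSucc - x k.succ)

/-- The size `∏ s_i · ∏_{i<j} sat ((x_i - x_j + s_j) (λ_i - λ_j))` of `Iint` predicted by the
concentration of its variables, with `s = scale lam x`. -/
noncomputable def scaleBound (n : ℕ) (lam x : Fin (n + 1) → ℝ) : ℝ :=
  (∏ k, scale lam x k) * satProd (Fin.init lam) (Fin.init x) (Fin.init x - scale lam x)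

/-- The explicit function to which `Iint` is comparable. -/
noncomputable def closedForm (n : ℕ) (lam x : Fin (n + 1) → ℝ) : ℝ :=
  (∏ k : Fin n, ramp (rate lam k) (x k.castSucc - x (Fin.last n))) *
    satProd (Fin.init lam) (Fin.init x) (Fin.init x)

/-- The integrand of `Iint`. -/
noncomputable def integrand {n : ℕ} (lam x : Fin (n + 1) → ℝ) (y : Fin n → ℝ) : ℝ :=
  Real.exp (-∑ k, rate lam k * (x k.castSucc - y k)) * satProd (Fin.init lam) y y

section Antitone

variable {n : ℕ} {lam x : Fin (n + 1) → ℝ} {y : Fin n → ℝ}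

lemma rate_nonneg (hl : Antitone lam) (k : Fin n) : 0 ≤ rate lam k :=
  sub_nonneg.2 (hl (Fin.le_last _))

lemma scale_nonneg (hl : Antitone lam) (hx : Antitone x) (k : Fin n) : 0 ≤ scale lam x k :=
  ramp_nonneg (rate_nonneg hl k) (sub_nonneg.2 (hx k.castSucc_le_succ))

lemma scale_le (hl : Antitone lam) (hx : Antitone x) (k : Fin n) :
    scale lam x k ≤ x k.castSucc - x k.succ :=
  ramp_le (rate_nonneg hl k) (sub_nonneg.2 (hx k.castSucc_le_succ))

lemma rate_mul_scale_le_one (hl : Antitone lam) (hx : Antitone x) (k : Fin n) :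
    rate lam k * scale lam x k ≤ 1 :=
  mul_ramp_le_one (rate_nonneg hl k) (sub_nonneg.2 (hx k.castSucc_le_succ))

lemma init_sub_scale_le_init (hl : Antitone lam) (hx : Antitone x) {i j : Fin n} (hij : i < j) :
    (Fin.init x - scale lam x) j ≤ Fin.init x i :=
  (sub_le_self _ (scale_nonneg hl hx j)).trans (antitone_init hx hij.le)

lemma scaleBound_nonneg (hl : Antitone lam) (hx : Antitone x) : 0 ≤ scaleBound n lam x :=
  mul_nonneg (prod_nonneg fun k _ => scale_nonneg hl hx k)
    (satProd_nonneg (antitone_init hl) fun _ _ => init_sub_scale_le_init hl hx)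

lemma closedForm_nonneg (hl : Antitone lam) (hx : Antitone x) : 0 ≤ closedForm n lam x :=
  mul_nonneg (prod_nonneg fun k _ =>
      ramp_nonneg (rate_nonneg hl k) (sub_nonneg.2 (hx (Fin.le_last _))))
    (satProd_nonneg (antitone_init hl) fun _ _ hij => antitone_init hx hij.le)

lemma le_of_mem_Icc_tail_init (hx : Antitone x) (hy : y ∈ Set.Icc (Fin.tail x) (Fin.init x))
    {i j : Fin n} (hij : i < j) : y j ≤ y i :=
  (hy.2 j).trans ((hx (Fin.succ_le_castSucc_iff.2 hij)).trans (hy.1 i))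

lemma integrand_nonneg (hl : Antitone lam) (hx : Antitone x)
    (hy : y ∈ Set.Icc (Fin.tail x) (Fin.init x)) : 0 ≤ integrand lam x y :=
  mul_nonneg (Real.exp_nonneg _)
    (satProd_nonneg (antitone_init hl) fun _ _ => le_of_mem_Icc_tail_init hx hy)

lemma Iint_nonneg (hl : Antitone lam) (hx : Antitone x) : 0 ≤ Iint n lam x :=
  setIntegral_nonneg measurableSet_Icc fun _ hy => integrand_nonneg hl hx hy

lemma integrableOn_integrand (hl : Antitone lam) (hx : Antitone x) :
    IntegrableOn (integrand lam x) (Set.Icc (Fin.tail x) (Fin.init x)) := by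
  refine ContinuousOn.integrableOn_compact isCompact_Icc ?_
  unfold integrand satProd sat
  refine ContinuousOn.mul (by fun_prop) (continuousOn_finsetProd _ fun i _ =>
    continuousOn_finsetProd _ fun j hj => ContinuousOn.div (by fun_prop) (by fun_prop) ?_)
  intro y hy
  have hij := mem_Ioi.1 hj
  have := mul_nonneg (sub_nonneg.2 (le_of_mem_Icc_tail_init hx hy hij))
    (sub_nonneg.2 (antitone_init hl hij.le))
  positivity

lemma sum_rate_mul_sub_le (hl : Antitone lam) (hx : Antitone x)
    (hy : Fin.init x - scale lam x ≤ y) :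
    ∑ k, rate lam k * (x k.castSucc - y k) ≤ n := by
  calc ∑ k, rate lam k * (x k.castSucc - y k)
      ≤ ∑ _k : Fin n, (1 : ℝ) := sum_le_sum fun k _ =>
        (mul_le_mul_of_nonneg_left (sub_le_comm.1 (hy k)) (rate_nonneg hl k)).trans
          (rate_mul_scale_le_one hl hx k)
    _ = n := by simp

-- The middle third of the window below each `x_k` keeps `y_i - y_j` of order `x_i - x_j + s_j`.
lemma exp_mul_satProd_le_integrand (hl : Antitone lam) (hx : Antitone x)
    (hy : y ∈ Set.Icc (Fin.init x - (2 / 3 : ℝ) • scale lam x)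
      (Fin.init x - (1 / 3 : ℝ) • scale lam x)) :
    Real.exp (-n) * (((3 ^ n) ^ n)⁻¹ *
      satProd (Fin.init lam) (Fin.init x) (Fin.init x - scale lam x)) ≤ integrand lam x y := by
  have hs := scale_nonneg hl hx
  have hlower : ∀ k, x k.castSucc - 2 / 3 * scale lam x k ≤ y k := hy.1
  have hupper : ∀ k, y k ≤ x k.castSucc - 1 / 3 * scale lam x k := hy.2
  have hsat : satProd (Fin.init lam) (Fin.init x) (Fin.init x - scale lam x) ≤
      (3 ^ n) ^ n * satProd (Fin.init lam) y y := by
    have hdiff : ∀ i j : Fin n, i < j →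
        Fin.init x i - (Fin.init x - scale lam x) j ≤ 3 * (y i - y j) := fun i j hij => by
      have hsi : scale lam x i ≤ x i.castSucc - x j.castSucc :=
        (scale_le hl hx i).trans (sub_le_sub_left (hx (Fin.succ_le_castSucc_iff.2 hij)) _)
      have := hlower i
      have := hupper j
      simp only [Pi.sub_apply, Fin.init]
      linarith
    simpa using satProd_le_mul_satProd (c := fun _ => 3) (antitone_init hl) (fun _ => by norm_num)
      (fun _ _ => init_sub_scale_le_init hl hx) hdiff
  have hsum : ∑ k, rate lam k * (x k.castSucc - y k) ≤ n := by
    refine sum_rate_mul_sub_le hl hx fun k => ?_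
    have := hlower k
    have := hs k
    simp only [Pi.sub_apply, Fin.init]
    linarith
  refine mul_le_mul (Real.exp_le_exp.2 (neg_le_neg hsum)) ?_ (mul_nonneg (by positivity)
    (satProd_nonneg (antitone_init hl) fun _ _ => init_sub_scale_le_init hl hx)) (Real.exp_nonneg _)
  rwa [inv_mul_le_iff₀ (by positivity)]

lemma mul_scaleBound_le_Iint (hl : Antitone lam) (hx : Antitone x) :
    Real.exp (-n) * ((3 ^ n) ^ n)⁻¹ * (1 / 3) ^ n * scaleBound n lam x ≤ Iint n lam x := by
  have hs := scale_nonneg hl hx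
  set lo := Fin.init x - (2 / 3 : ℝ) • scale lam x
  set hi := Fin.init x - (1 / 3 : ℝ) • scale lam x
  have hlen : ∀ k, hi k - lo k = 1 / 3 * scale lam x k := fun k => by
    simp only [lo, hi, Pi.sub_apply, Pi.smul_apply, smul_eq_mul]; ring
  have hle : lo ≤ hi := fun k => sub_nonneg.1 (by rw [hlen]; linarith [hs k])
  have hsub : Set.Icc lo hi ⊆ Set.Icc (Fin.tail x) (Fin.init x) := by
    refine Set.Icc_subset_Icc (fun k => ?_) (fun k => ?_) <;>
      simp only [lo, hi, Pi.sub_apply, Pi.smul_apply, smul_eq_mul, Fin.init, Fin.tail] <;>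
      linarith [hs k, scale_le hl hx k]
  have hvol : (volume : Measure (Fin n → ℝ)).real (Set.Icc lo hi) =
      (1 / 3) ^ n * ∏ k, scale lam x k := by
    rw [measureReal_def, Real.volume_Icc_pi_toReal hle]
    simp only [hlen, prod_mul_distrib, prod_const, card_univ, Fintype.card_fin]
  have hint := integrableOn_integrand hl hx
  calc Real.exp (-n) * ((3 ^ n) ^ n)⁻¹ * (1 / 3) ^ n * scaleBound n lam x
      = Real.exp (-n) * (((3 ^ n) ^ n)⁻¹ *
          satProd (Fin.init lam) (Fin.init x) (Fin.init x - scale lam x)) *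
          (volume : Measure (Fin n → ℝ)).real (Set.Icc lo hi) := by rw [hvol, scaleBound]; ring
    _ ≤ ∫ y in Set.Icc lo hi, integrand lam x y :=
        setIntegral_ge_of_const_le_real measurableSet_Icc isCompact_Icc.measure_lt_top.ne
          (fun _ hy => exp_mul_satProd_le_integrand hl hx hy) (hint.mono_set hsub)
    _ ≤ ∫ y in Set.Icc (Fin.tail x) (Fin.init x), integrand lam x y :=
        setIntegral_mono_set hint ((ae_restrict_iff' measurableSet_Icc).2
          (ae_of_all _ fun y hy => integrand_nonneg hl hx hy)) hsub.eventuallyLE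

lemma rate_mul_sub_nonneg (hl : Antitone lam) (hy : y ≤ Fin.init x) (k : Fin n) :
    0 ≤ rate lam k * (x k.castSucc - y k) :=
  mul_nonneg (rate_nonneg hl k) (sub_nonneg.2 (hy k))

lemma satProd_le_prod_pow_mul_satProd (hl : Antitone lam) (hx : Antitone x)
    (hy : y ∈ Set.Icc (Fin.tail x) (Fin.init x)) :
    satProd (Fin.init lam) y y ≤ (∏ k, (1 + rate lam k * (x k.castSucc - y k))) ^ n *
      satProd (Fin.init lam) (Fin.init x) (Fin.init x - scale lam x) := by
  have hu := rate_mul_sub_nonneg hl hy.2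
  refine satProd_le_mul_satProd (antitone_init hl) (fun j => le_add_of_nonneg_right (hu j))
    (fun _ _ => le_of_mem_Icc_tail_init hx hy) fun i j hij => ?_
  have hwindow : x j.castSucc - y j ≤
      scale lam x j * (1 + rate lam j * (x j.castSucc - y j)) :=
    le_ramp_mul (rate_nonneg hl j) (sub_nonneg.2 (hy.2 j)) (sub_le_sub_left (hy.1 j) _)
  have hgrow := mul_nonneg (hu j) (sub_nonneg.2 (antitone_init hx hij.le))
  have hyi : y i ≤ x i.castSucc := hy.2 i
  simp only [Pi.sub_apply, Fin.init] at hgrow ⊢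
  linarith

lemma integrand_le (hl : Antitone lam) (hx : Antitone x)
    (hy : y ∈ Set.Icc (Fin.tail x) (Fin.init x)) :
    integrand lam x y ≤ (Real.exp 1 * (n + 2).factorial) ^ n *
      satProd (Fin.init lam) (Fin.init x) (Fin.init x - scale lam x) *
      ∏ k, ((1 + rate lam k * (x k.castSucc - y k)) ^ 2)⁻¹ := by
  have hu := rate_mul_sub_nonneg hl hy.2
  set u : Fin n → ℝ := fun k => rate lam k * (x k.castSucc - y k)
  set A := satProd (Fin.init lam) (Fin.init x) (Fin.init x - scale lam x)
  have hA : 0 ≤ A := satProd_nonneg (antitone_init hl) fun _ _ => init_sub_scale_le_init hl hx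
  calc integrand lam x y
      ≤ Real.exp (-∑ k, u k) * ((∏ k, (1 + u k)) ^ n * A) :=
        mul_le_mul_of_nonneg_left (satProd_le_prod_pow_mul_satProd hl hx hy) (Real.exp_nonneg _)
    _ = A * ∏ k, ((1 + u k) ^ n * Real.exp (-u k)) := by
        rw [← sum_neg_distrib, Real.exp_sum, prod_mul_distrib, prod_pow]; ring
    _ ≤ A * ∏ k, (Real.exp 1 * (n + 2).factorial * ((1 + u k) ^ 2)⁻¹) := by
        refine mul_le_mul_of_nonneg_left (prod_le_prod (fun k _ => ?_) fun k _ =>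
          one_add_pow_mul_exp_neg_le n (hu k)) hA
        have := hu k
        positivity
    _ = _ := by rw [prod_mul_distrib, prod_const, card_univ, Fintype.card_fin]; ring

lemma Iint_le_mul_scaleBound (hl : Antitone lam) (hx : Antitone x) :
    Iint n lam x ≤ (Real.exp 1 * (n + 2).factorial) ^ n * scaleBound n lam x := by
  set C := (Real.exp 1 * (n + 2).factorial) ^ n *
    satProd (Fin.init lam) (Fin.init x) (Fin.init x - scale lam x)
  have hint : IntegrableOn (fun y => C * ∏ k, ((1 + rate lam k * (x k.castSucc - y k)) ^ 2)⁻¹)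
      (Set.Icc (Fin.tail x) (Fin.init x)) := by
    refine ContinuousOn.integrableOn_compact isCompact_Icc (continuousOn_const.mul
      (continuousOn_finsetProd _ fun k _ => ContinuousOn.inv₀ (by fun_prop) fun y hy => ?_))
    have := rate_mul_sub_nonneg hl hy.2 k
    positivity
  calc Iint n lam x
      ≤ ∫ y in Set.Icc (Fin.tail x) (Fin.init x),
          C * ∏ k, ((1 + rate lam k * (x k.castSucc - y k)) ^ 2)⁻¹ :=
        setIntegral_mono_on (integrableOn_integrand hl hx) hint measurableSet_Icc
          fun _ hy => integrand_le hl hx hy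
    _ = C * ∏ k : Fin n, ∫ t in Set.Icc (x k.succ) (x k.castSucc),
          ((1 + rate lam k * (x k.castSucc - t)) ^ 2)⁻¹ := by
        rw [integral_const_mul]
        exact congrArg _ (setIntegral_Icc_pi_prod (Fin.tail x) (Fin.init x)
          fun k t => ((1 + rate lam k * (x k.castSucc - t)) ^ 2)⁻¹)
    _ = C * ∏ k, scale lam x k := by
        congr 1
        exact prod_congr rfl fun k _ =>
          integral_inv_one_add_mul_sq (rate_nonneg hl k) (hx k.castSucc_le_succ)
    _ = _ := by rw [scaleBound]; ring

end Antitone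

lemma closedForm_succ (n : ℕ) (lam x : Fin (n + 2) → ℝ) :
    closedForm (n + 1) lam x =
      ramp (rate lam 0) (x 0 - x (Fin.last (n + 1))) *
        satRow (Fin.init lam) (Fin.init x) (Fin.init x) *
        closedForm n (Fin.tail lam) (Fin.tail x) := by
  unfold closedForm
  rw [Fin.prod_univ_succ, satProd_succ]
  exact mul_mul_mul_comm _ _ _ _

lemma scaleBound_succ (n : ℕ) (lam x : Fin (n + 2) → ℝ) :
    scaleBound (n + 1) lam x =
      scale lam x 0 * satRow (Fin.init lam) (Fin.init x) (Fin.init x - scale lam x) *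
        scaleBound n (Fin.tail lam) (Fin.tail x) := by
  unfold scaleBound
  rw [Fin.prod_univ_succ, satProd_succ]
  exact mul_mul_mul_comm _ _ _ _

/-- The pairs `(λ, x)` of weakly decreasing vectors. Estimates that are uniform over such pairs are
expressed by `=O` and `=Θ` along the principal filter of this set. -/
def antitonePairs (n : ℕ) : Set ((Fin n → ℝ) × (Fin n → ℝ)) :=
  {p | Antitone p.1 ∧ Antitone p.2}

lemma mapsTo_tail_antitonePairs {n : ℕ} :
    Set.MapsTo (Prod.map Fin.tail Fin.tail) (antitonePairs (n + 1)) (antitonePairs n) :=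
  fun _ hp => ⟨antitone_tail hp.1, antitone_tail hp.2⟩

lemma scale_mul_satRow_isTheta (n : ℕ) :
    (fun p : (Fin (n + 2) → ℝ) × (Fin (n + 2) → ℝ) => scale p.1 p.2 0 *
      satRow (Fin.init p.1) (Fin.init p.2) (Fin.init p.2 - scale p.1 p.2))
    =Θ[𝓟 (antitonePairs (n + 2))] fun p => ramp (rate p.1 0) (p.2 0 - p.2 (Fin.last (n + 1))) *
      satRow (Fin.init p.1) (Fin.init p.2) (Fin.init p.2) := by
  refine isTheta_mul_prod_of_telescope
    (r := fun (j : Fin (n + 1)) (p : (Fin (n + 2) → ℝ) × (Fin (n + 2) → ℝ)) =>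
      ramp (rate p.1 0) (p.2 0 - p.2 j.succ)) fun j => ?_
  have htrade := ramp_mul_sat_isTheta (s := antitonePairs (n + 2))
    (a := fun p => p.2 0 - p.2 j.succ.castSucc)
    (b := fun p => p.2 j.succ.castSucc - p.2 j.succ.succ)
    (l := fun p => p.1 0 - p.1 j.succ.castSucc) (μ := fun p => rate p.1 j.succ)
    (fun p hp => sub_nonneg.2 (hp.2 (Fin.zero_le _)))
    (fun p hp => sub_nonneg.2 (hp.2 j.succ.castSucc_le_succ))
    (fun p hp => sub_nonneg.2 (hp.1 (Fin.zero_le _))) fun p hp => rate_nonneg hp.1 _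
  have hrate : ∀ lam : Fin (n + 2) → ℝ,
      lam 0 - lam j.succ.castSucc + rate lam j.succ = rate lam 0 :=
    fun _ => sub_add_sub_cancel _ _ _
  simp only [hrate, sub_add_sub_cancel] at htrade
  simp only [sub_add] at htrade
  exact htrade

lemma scaleBound_isTheta_closedForm (n : ℕ) :
    (fun p : (Fin (n + 1) → ℝ) × (Fin (n + 1) → ℝ) => scaleBound n p.1 p.2)
    =Θ[𝓟 (antitonePairs (n + 1))] fun p => closedForm n p.1 p.2 := by
  induction n with
  | zero => simpa [scaleBound, closedForm, satProd] using isTheta_rfl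
  | succ n ih =>
    simp only [scaleBound_succ, closedForm_succ]
    exact (scale_mul_satRow_isTheta n).mul (isTheta_principal_comp mapsTo_tail_antitonePairs ih)

theorem Iint_isTheta_closedForm (n : ℕ) :
    (fun p : (Fin (n + 1) → ℝ) × (Fin (n + 1) → ℝ) => Iint n p.1 p.2)
    =Θ[𝓟 (antitonePairs (n + 1))] fun p => closedForm n p.1 p.2 := by
  refine IsTheta.trans ⟨?_, ?_⟩ (scaleBound_isTheta_closedForm n)
  · exact isBigO_principal_of_nonneg (fun p hp => Iint_nonneg hp.1 hp.2)
      (fun p hp => scaleBound_nonneg hp.1 hp.2) fun p hp => Iint_le_mul_scaleBound hp.1 hp.2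
  · refine isBigO_principal_of_nonneg (fun p hp => scaleBound_nonneg hp.1 hp.2)
      (fun p hp => Iint_nonneg hp.1 hp.2)
      (c := (Real.exp (-n) * ((3 ^ n) ^ n)⁻¹ * (1 / 3) ^ n)⁻¹) fun p hp => ?_
    rw [← div_eq_inv_mul, le_div_iff₀' (by positivity)]
    exact mul_scaleBound_le_Iint hp.1 hp.2

/-- The vector with its next-to-last entry removed. -/
def dropPenultimate {α : Type*} {n : ℕ} (v : Fin (n + 2) → α) : Fin (n + 1) → α :=
  fun k => if (k : ℕ) < n then v k.castSucc else v (Fin.last (n + 1))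

section DropPenultimate

variable {α : Type*} {n : ℕ}

lemma init_dropPenultimate (v : Fin (n + 2) → α) :
    Fin.init (dropPenultimate v) = Fin.init (Fin.init v) := funext fun k => if_pos k.2

lemma dropPenultimate_last (v : Fin (n + 2) → α) :
    dropPenultimate v (Fin.last n) = v (Fin.last (n + 1)) := if_neg (lt_irrefl n)

lemma tail_dropPenultimate (v : Fin (n + 3) → α) :
    Fin.tail (dropPenultimate v) = dropPenultimate (Fin.tail v) := by
  funext k
  simp only [Fin.tail, dropPenultimate, Fin.val_succ, Nat.add_lt_add_iff_right, Fin.castSucc_succ,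
    Fin.succ_last]

lemma rate_dropPenultimate_zero (v : Fin (n + 3) → ℝ) :
    rate (dropPenultimate v) 0 = rate v 0 := by
  rw [rate, dropPenultimate_last]
  exact congrArg (· - _) (congrFun (init_dropPenultimate v) 0)

lemma antitone_dropPenultimate [Preorder α] {v : Fin (n + 2) → α} (hv : Antitone v) :
    Antitone (dropPenultimate v) := by
  intro i j hij
  rw [Fin.le_def] at hij
  unfold dropPenultimate
  split_ifs
  · exact hv hij
  · omega
  · exact hv (Fin.le_last _)
  · exact le_rfl

lemma mapsTo_dropPenultimate_init_antitonePairs :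
    Set.MapsTo (Prod.map dropPenultimate Fin.init) (antitonePairs (n + 2))
      (antitonePairs (n + 1)) :=
  fun _ hp => ⟨antitone_dropPenultimate hp.1, antitone_init hp.2⟩

end DropPenultimate

/-- The left side of the recursion for a family `J` in place of `Iint`. With `n = m + 1` it is
`J⁽ⁿ⁺¹⁾(λ; x) · J⁽ⁿ⁻¹⁾(λ_2,…,λ_n,λ_{n+2}; x_2,…,x_{n+1})`. -/
def recursionLHS (J : ∀ n, (Fin (n + 1) → ℝ) → (Fin (n + 1) → ℝ) → ℝ) {m : ℕ}
    (lam x : Fin (m + 3) → ℝ) : ℝ :=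
  J (m + 2) lam x * J m (dropPenultimate (Fin.tail lam)) (Fin.init (Fin.tail x))

/-- The right side of the recursion for a family `J` in place of `Iint`. With `n = m + 1` it is
`J⁽ⁿ⁾(λ_1,…,λ_n,λ_{n+2}; x_1,…,x_{n+1}) · sat ((x_1 - x_{n+1}) (λ_1 - λ_{n+1})) ·
J⁽ⁿ⁾(λ_2,…,λ_{n+2}; x_2,…,x_{n+2})`. -/
noncomputable def recursionRHS (J : ∀ n, (Fin (n + 1) → ℝ) → (Fin (n + 1) → ℝ) → ℝ) {m : ℕ}
    (lam x : Fin (m + 3) → ℝ) : ℝ :=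
  J (m + 1) (dropPenultimate lam) (Fin.init x) *
    sat ((x 0 - x (Fin.last (m + 1)).castSucc) * (lam 0 - lam (Fin.last (m + 1)).castSucc)) *
    J (m + 1) (Fin.tail lam) (Fin.tail x)

/-- The factor shared by the two sides of the recursion for `closedForm`. -/
noncomputable def recursionCommonFactor {m : ℕ} (lam x : Fin (m + 3) → ℝ) : ℝ :=
  satRow (Fin.init lam) (Fin.init x) (Fin.init x) * closedForm (m + 1) (Fin.tail lam) (Fin.tail x) *
    closedForm m (dropPenultimate (Fin.tail lam)) (Fin.init (Fin.tail x))

section Recursion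

variable {m : ℕ} {lam x : Fin (m + 3) → ℝ}

lemma recursionLHS_nonneg {J : ∀ n, (Fin (n + 1) → ℝ) → (Fin (n + 1) → ℝ) → ℝ}
    (hJ : ∀ {n lam x}, Antitone lam → Antitone x → 0 ≤ J n lam x)
    (hl : Antitone lam) (hx : Antitone x) : 0 ≤ recursionLHS J lam x :=
  mul_nonneg (hJ hl hx)
    (hJ (antitone_dropPenultimate (antitone_tail hl)) (antitone_init (antitone_tail hx)))

lemma recursionRHS_nonneg {J : ∀ n, (Fin (n + 1) → ℝ) → (Fin (n + 1) → ℝ) → ℝ}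
    (hJ : ∀ {n lam x}, Antitone lam → Antitone x → 0 ≤ J n lam x)
    (hl : Antitone lam) (hx : Antitone x) : 0 ≤ recursionRHS J lam x :=
  mul_nonneg (mul_nonneg (hJ (antitone_dropPenultimate hl) (antitone_init hx))
      (sat_nonneg (mul_nonneg (sub_nonneg.2 (hx (Fin.zero_le _)))
        (sub_nonneg.2 (hl (Fin.zero_le _))))))
    (hJ (antitone_tail hl) (antitone_tail hx))

lemma recursionLHS_closedForm (lam x : Fin (m + 3) → ℝ) :
    recursionLHS closedForm lam x =
      ramp (rate lam 0) (x 0 - x (Fin.last (m + 2))) * recursionCommonFactor lam x := by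
  rw [recursionLHS, recursionCommonFactor, closedForm_succ (m + 1)]
  ring

lemma recursionRHS_closedForm (lam x : Fin (m + 3) → ℝ) :
    recursionRHS closedForm lam x =
      ramp (rate lam 0) (x 0 - x (Fin.last (m + 1)).castSucc) * recursionCommonFactor lam x := by
  have hrow : satRow (Fin.init lam) (Fin.init x) (Fin.init x) =
      satRow (Fin.init (Fin.init lam)) (Fin.init (Fin.init x)) (Fin.init (Fin.init x)) *
        sat ((x 0 - x (Fin.last (m + 1)).castSucc) * (lam 0 - lam (Fin.last (m + 1)).castSucc)) :=
    satRow_succ _ _ _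
  have hfirst : closedForm (m + 1) (dropPenultimate lam) (Fin.init x) =
      ramp (rate lam 0) (x 0 - x (Fin.last (m + 1)).castSucc) *
        satRow (Fin.init (Fin.init lam)) (Fin.init (Fin.init x)) (Fin.init (Fin.init x)) *
        closedForm m (dropPenultimate (Fin.tail lam)) (Fin.init (Fin.tail x)) := by
    rw [closedForm_succ, rate_dropPenultimate_zero, init_dropPenultimate, tail_dropPenultimate]
    rfl
  rw [recursionRHS, recursionCommonFactor, hrow, hfirst]
  ring

lemma recursionCommonFactor_nonneg (hl : Antitone lam) (hx : Antitone x) :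
    0 ≤ recursionCommonFactor lam x := by
  have hrow : 0 ≤ satRow (Fin.init lam) (Fin.init x) (Fin.init x) :=
    prod_nonneg fun j _ => sat_nonneg (mul_nonneg
      (sub_nonneg.2 (antitone_init hx (Fin.zero_le _)))
      (sub_nonneg.2 (antitone_init hl (Fin.zero_le _))))
  exact mul_nonneg (mul_nonneg hrow (closedForm_nonneg (antitone_tail hl) (antitone_tail hx)))
    (closedForm_nonneg (antitone_dropPenultimate (antitone_tail hl))
      (antitone_init (antitone_tail hx)))

lemma recursionRHS_closedForm_le (hl : Antitone lam) (hx : Antitone x) :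
    recursionRHS closedForm lam x ≤ recursionLHS closedForm lam x := by
  rw [recursionRHS_closedForm, recursionLHS_closedForm]
  refine mul_le_mul_of_nonneg_right ?_ (recursionCommonFactor_nonneg hl hx)
  simpa using ramp_le_mul_ramp (rate_nonneg hl 0) le_rfl (sub_nonneg.2 (hx (Fin.zero_le _)))
    ((sub_le_sub_left (hx (Fin.le_last _)) _).trans_eq (one_mul _).symm)

lemma recursionLHS_closedForm_le_mul {M : ℝ} (hl : Antitone lam) (hx : Antitone x)
    (hgap : x (Fin.last (m + 1)).castSucc - x (Fin.last (m + 2)) ≤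
      M * (x 0 - x (Fin.last (m + 1)).castSucc)) :
    recursionLHS closedForm lam x ≤ (1 + |M|) * recursionRHS closedForm lam x := by
  rw [recursionRHS_closedForm, recursionLHS_closedForm, ← mul_assoc]
  refine mul_le_mul_of_nonneg_right ?_ (recursionCommonFactor_nonneg hl hx)
  have hx0 : 0 ≤ x 0 - x (Fin.last (m + 1)).castSucc := sub_nonneg.2 (hx (Fin.zero_le _))
  have hM := mul_le_mul_of_nonneg_right (le_abs_self M) hx0
  refine ramp_le_mul_ramp (rate_nonneg hl 0) (le_add_of_nonneg_right (abs_nonneg M))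
    (sub_nonneg.2 (hx (Fin.zero_le _))) ?_
  linarith

end Recursion

lemma recursionLHS_Iint_isTheta (m : ℕ) :
    (fun p : (Fin (m + 3) → ℝ) × (Fin (m + 3) → ℝ) => recursionLHS Iint p.1 p.2)
    =Θ[𝓟 (antitonePairs (m + 3))] fun p => recursionLHS closedForm p.1 p.2 :=
  (Iint_isTheta_closedForm (m + 2)).mul <| isTheta_principal_comp
    (mapsTo_dropPenultimate_init_antitonePairs.comp mapsTo_tail_antitonePairs)
    (Iint_isTheta_closedForm m)

lemma recursionRHS_Iint_isTheta (m : ℕ) :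
    (fun p : (Fin (m + 3) → ℝ) × (Fin (m + 3) → ℝ) => recursionRHS Iint p.1 p.2)
    =Θ[𝓟 (antitonePairs (m + 3))] fun p => recursionRHS closedForm p.1 p.2 :=
  have hJ := Iint_isTheta_closedForm (m + 1)
  ((isTheta_principal_comp mapsTo_dropPenultimate_init_antitonePairs hJ).mul isTheta_rfl).mul
    (isTheta_principal_comp mapsTo_tail_antitonePairs hJ)

lemma recursionRHS_Iint_isBigO (m : ℕ) :
    (fun p : (Fin (m + 3) → ℝ) × (Fin (m + 3) → ℝ) => recursionRHS Iint p.1 p.2)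
    =O[𝓟 (antitonePairs (m + 3))] fun p => recursionLHS Iint p.1 p.2 :=
  (recursionRHS_Iint_isTheta m).trans_isBigO <| .trans_isTheta
    (isBigO_principal_of_nonneg (c := 1)
      (fun _ hp => recursionRHS_nonneg closedForm_nonneg hp.1 hp.2)
      (fun _ hp => recursionLHS_nonneg closedForm_nonneg hp.1 hp.2)
      fun _ hp => (recursionRHS_closedForm_le hp.1 hp.2).trans_eq (one_mul _).symm)
    (recursionLHS_Iint_isTheta m).symm

lemma recursionLHS_Iint_isBigO (m : ℕ) (M : ℝ) :
    (fun p : (Fin (m + 3) → ℝ) × (Fin (m + 3) → ℝ) => recursionLHS Iint p.1 p.2)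
    =O[𝓟 (antitonePairs (m + 3) ∩
      {p | p.2 (Fin.last (m + 1)).castSucc - p.2 (Fin.last (m + 2)) ≤
        M * (p.2 0 - p.2 (Fin.last (m + 1)).castSucc)})] fun p => recursionRHS Iint p.1 p.2 :=
  have hsub := principal_mono.2 Set.inter_subset_left
  ((recursionLHS_Iint_isTheta m).mono hsub).trans_isBigO <| .trans_isTheta
    (isBigO_principal_of_nonneg
      (fun _ hp => recursionLHS_nonneg closedForm_nonneg hp.1.1 hp.1.2)
      (fun _ hp => recursionRHS_nonneg closedForm_nonneg hp.1.1 hp.1.2)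
      fun _ hp => recursionLHS_closedForm_le_mul hp.1.1 hp.1.2 hp.2)
    ((recursionRHS_Iint_isTheta m).symm.mono hsub)

theorem recursive_estimate_general (m : ℕ) (M : ℝ) :
    ∃ C₁ C₂ : ℝ, 0 < C₁ ∧ 0 < C₂ ∧ ∀ lam x : Fin (m + 3) → ℝ, Antitone lam → Antitone x →
      C₁ * recursionRHS Iint lam x ≤ recursionLHS Iint lam x ∧
      (x (Fin.last (m + 1)).castSucc - x (Fin.last (m + 2)) ≤
          M * (x 0 - x (Fin.last (m + 1)).castSucc) →
        recursionLHS Iint lam x ≤ C₂ * recursionRHS Iint lam x) := by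
  obtain ⟨C, hC, hlower⟩ := exists_forall_le_mul_of_isBigO_principal (recursionRHS_Iint_isBigO m)
    fun p hp => recursionLHS_nonneg Iint_nonneg hp.1 hp.2
  obtain ⟨C₂, hC₂, hupper⟩ := exists_forall_le_mul_of_isBigO_principal
    (recursionLHS_Iint_isBigO m M) fun p hp => recursionRHS_nonneg Iint_nonneg hp.1.1 hp.1.2
  refine ⟨C⁻¹, C₂, inv_pos.2 hC, hC₂, fun lam x hl hx => ⟨?_, fun hgap => ?_⟩⟩
  · exact (inv_mul_le_iff₀ hC).2 (hlower (lam, x) ⟨hl, hx⟩)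
  · exact hupper (lam, x) ⟨⟨hl, hx⟩, hgap⟩

/-- Recursive estimate (here `n = m + 1 ≥ 1`, vectors in `ℝ^{n+2} = ℝ^{m+3}`): for weakly
decreasing `λ, x` with `x_1 − x_2 ≥ x_{n+1} − x_{n+2}`,
`I⁽ⁿ⁺¹⁾(λ;x) · I⁽ⁿ⁻¹⁾(λ_2,…,λ_n,λ_{n+2}; x_2,…,x_{n+1})` is comparable with
`I⁽ⁿ⁾(λ_1,…,λ_n,λ_{n+2}; x_1,…,x_{n+1}) · [(x_1−x_{n+1})(λ_1−λ_{n+1})/(1+(x_1−x_{n+1})(λ_1−λ_{n+1}))]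
  · I⁽ⁿ⁾(λ_2,…,λ_{n+1},λ_{n+2}; x_2,…,x_{n+2})`, with constants depending only on `n`. -/
theorem recursive_estimate (m : ℕ) :
    ∃ C₁ C₂ : ℝ, 0 < C₁ ∧ 0 < C₂ ∧
      ∀ lam x : Fin (m + 3) → ℝ, Antitone lam → Antitone x →
        x 0 - x 1 ≥ x ⟨m + 1, by omega⟩ - x ⟨m + 2, by omega⟩ →
        (C₁ * (Iint (m + 1)
                (fun k : Fin (m + 2) =>
                  if (k : ℕ) < m + 1 then lam k.castSucc else lam (Fin.last (m + 2)))
                (fun k : Fin (m + 2) => x k.castSucc) *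
              ((x 0 - x ⟨m + 1, by omega⟩) * (lam 0 - lam ⟨m + 1, by omega⟩) /
                (1 + (x 0 - x ⟨m + 1, by omega⟩) * (lam 0 - lam ⟨m + 1, by omega⟩))) *
              Iint (m + 1)
                (fun k : Fin (m + 2) => lam k.succ)
                (fun k : Fin (m + 2) => x k.succ)) ≤
            Iint (m + 2) lam x *
              Iint m
                (fun k : Fin (m + 1) =>
                  if (k : ℕ) < m then lam k.succ.castSucc else lam (Fin.last (m + 2)))
                (fun k : Fin (m + 1) => x k.succ.castSucc)) ∧
        (Iint (m + 2) lam x *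
              Iint m
                (fun k : Fin (m + 1) =>
                  if (k : ℕ) < m then lam k.succ.castSucc else lam (Fin.last (m + 2)))
                (fun k : Fin (m + 1) => x k.succ.castSucc) ≤
          C₂ * (Iint (m + 1)
                (fun k : Fin (m + 2) =>
                  if (k : ℕ) < m + 1 then lam k.castSucc else lam (Fin.last (m + 2)))
                (fun k : Fin (m + 2) => x k.castSucc) *
              ((x 0 - x ⟨m + 1, by omega⟩) * (lam 0 - lam ⟨m + 1, by omega⟩) /
                (1 + (x 0 - x ⟨m + 1, by omega⟩) * (lam 0 - lam ⟨m + 1, by omega⟩))) *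
              Iint (m + 1)
                (fun k : Fin (m + 2) => lam k.succ)
                (fun k : Fin (m + 2) => x k.succ))) := by
  obtain ⟨C₁, C₂, hC₁, hC₂, h⟩ := recursive_estimate_general m 1
  refine ⟨C₁, C₂, hC₁, hC₂, fun lam x hl hx hgap =>
    (h lam x hl hx).imp_right fun hupper => hupper ?_⟩
  have hx1 : x (Fin.last (m + 1)).castSucc ≤ x 1 := hx (by simp [Fin.le_def])
  change x (Fin.last (m + 1)).castSucc - x (Fin.last (m + 2)) ≤ x 0 - x 1 at hgap
  linarith
end

section
/- Let n ≥ 1 and let λ, x ∈ ℝⁿ be weakly decreasing and satisfy (λ_i−λ_j)(x_i−x_j) ≥ log(n!) for all 1 ≤ i < j ≤ n. Then (1/2)·e^{⟨λ,x⟩} ≤ ∑_{σ∈Sₙ} sgn(σ)·exp(∑_{k=1}^n λ_{σ(k)} x_k) ≤ n!·e^{⟨λ,x⟩}. (Consequently, in this range the spherical function of type A_{n−1} satisfies ψ_λ(x) ≍ e^{⟨λ,x⟩}/(V(λ)V(x)).) -/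
open Finset

/-!
Both inequalities compare the terms of the alternating sum with the identity term `E`. The lower
bound needs that every other exponential is at most `E / n!`. As `(lam i - lam j) * (x i - x j)` is
never negative, `lam` and `x` order the indices alike. For `σ ≠ 1`, let `i` be the index moved by
`σ` at which both are largest, and compose `σ` with a transposition so that `i` becomes fixed: this
raises `∑ k, lam (σ k) * x k` by at least `log n!`, and the result is still at most
`∑ k, lam k * x k` by the rearrangement inequality. Since the signs add up to zero, all
exponentials may be lowered by `E / (2 n!)` without changing the sum; those with `σ ≠ 1` then have
absolute value at most `E / (2 n!)`, so that at least `E / 2` is left of the identity term.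
-/

section Rearrangement

open Equiv Equiv.Perm

variable {ι : Type*}

lemma exists_mem_forall_le_and_le_of_monovary {α β : Type*} [LinearOrder α] [LinearOrder β]
    {f : ι → α} {g : ι → β} (hfg : Monovary f g) {s : Finset ι} (hs : s.Nonempty) :
    ∃ i ∈ s, ∀ k ∈ s, f k ≤ f i ∧ g k ≤ g i := by
  obtain ⟨i, hi, hmax⟩ := s.exists_max_image (fun k => toLex (f k, g k)) hs
  refine ⟨i, hi, fun k hk => ?_⟩
  obtain hlt | ⟨heq, hle⟩ := Prod.Lex.toLex_le_toLex.1 (hmax k hk)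
  · exact ⟨hlt.le, hfg.symm hlt⟩
  · exact ⟨heq.le, hle⟩

variable {R : Type*} [Ring R]

lemma sum_comp_swap_mul [Fintype ι] [DecidableEq ι] (f g : ι → R) (i j : ι) :
    ∑ k, f (swap i j k) * g k = ∑ k, f k * g k - (f i - f j) * (g i - g j) := by
  obtain rfl | hij := eq_or_ne i j
  · simp
  have hdiff : ∑ k, (f k - f (swap i j k)) * g k = (f i - f j) * g i + (f j - f i) * g j := by
    rw [Fintype.sum_eq_add i j hij fun k hk => by simp [swap_apply_of_ne_of_ne hk.1 hk.2],
      swap_apply_left, swap_apply_right]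
  simp only [sub_mul, sum_sub_distrib] at hdiff
  rw [eq_sub_iff_add_eq', ← eq_sub_iff_add_eq, hdiff]
  noncomm_ring

variable [LinearOrder R] [IsStrictOrderedRing R] {f g : ι → R} {L : R}

lemma monovary_of_pairwise_le_sub_mul_sub (hL₀ : 0 ≤ L)
    (hL : Pairwise fun i j => L ≤ (f i - f j) * (g i - g j)) : Monovary f g := by
  refine monovary_iff_forall_mul_nonneg.2 fun i j => ?_
  obtain rfl | hij := eq_or_ne i j
  · simp
  · exact hL₀.trans (hL hij.symm)

lemma exists_le_comp_perm_sub_mul_sub_of_ne_one [Finite ι] (hfg : Monovary f g)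
    (hL : Pairwise fun i j => L ≤ (f i - f j) * (g i - g j)) {σ : Perm ι} (hσ : σ ≠ 1) :
    ∃ i j, L ≤ (f (σ j) - f (σ i)) * (g i - g j) := by
  classical
  have := Fintype.ofFinite ι
  obtain ⟨i, hi, hmax⟩ := exists_mem_forall_le_and_le_of_monovary hfg
    (nonempty_iff_ne_empty.2 (support_eq_empty_iff.not.2 hσ))
  obtain ⟨j, hji⟩ := σ.surjective i
  have hj : j ∈ σ.support := apply_mem_support.1 (hji.symm ▸ hi)
  have hij : i ≠ j := fun h => mem_support.1 hj (hji.trans h)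
  refine ⟨i, j, ?_⟩
  rw [hji]
  -- Of the pairs `(i, j)` and `(i, σ i)`, take the one whose second point has the larger values:
  -- its product bounds the mixed product in the goal from below.
  obtain hle | hlt := le_or_gt (f (σ i)) (f j)
  · exact (hL hij).trans <|
      mul_le_mul_of_nonneg_right (sub_le_sub_left hle _) (sub_nonneg.2 (hmax j hj).2)
  · exact (hL (mem_support.1 hi).symm).trans <|
      mul_le_mul_of_nonneg_left (sub_le_sub_left (hfg.symm hlt) _)
        (sub_nonneg.2 (hmax _ (apply_mem_support.2 hi)).1)

lemma sum_comp_perm_mul_add_le_of_ne_one [Fintype ι] (hfg : Monovary f g)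
    (hL : Pairwise fun i j => L ≤ (f i - f j) * (g i - g j)) {σ : Perm ι} (hσ : σ ≠ 1) :
    ∑ k, f (σ k) * g k + L ≤ ∑ k, f k * g k := by
  classical
  obtain ⟨i, j, hij⟩ := exists_le_comp_perm_sub_mul_sub_of_ne_one hfg hL hσ
  calc ∑ k, f (σ k) * g k + L
      ≤ ∑ k, f (σ k) * g k + (f (σ j) - f (σ i)) * (g i - g j) := by gcongr
    _ = ∑ k, f (σ k) * g k - (f (σ i) - f (σ j)) * (g i - g j) := by
      rw [← neg_sub (f (σ i)), neg_mul, ← sub_eq_add_neg]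
    _ = ∑ k, f ((σ * swap i j) k) * g k := (sum_comp_swap_mul (f ∘ σ) g i j).symm
    _ ≤ ∑ k, f k * g k := hfg.sum_comp_perm_mul_le_sum_mul

end Rearrangement

section SignedSum

open Equiv Equiv.Perm
open scoped Nat

variable {ι : Type*} [Fintype ι] [DecidableEq ι] {R : Type*} [CommRing R]

lemma sum_sign_eq_zero [Nontrivial ι] : ∑ σ : Perm ι, ((sign σ : ℤ) : R) = 0 := by
  obtain ⟨i, j, hij⟩ := exists_pair_ne ι
  have hdet : (Matrix.of fun _ _ : ι => (1 : R)).det = 0 := Matrix.det_zero_of_row_eq hij rfl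
  simpa [Matrix.det_apply'] using hdet

variable [LinearOrder R] [IsStrictOrderedRing R]

lemma abs_sign_mul (σ : Perm ι) (r : R) : |((sign σ : ℤ) : R) * r| = |r| := by
  rw [abs_mul, abs_unit_intCast, one_mul]

lemma sum_sign_mul_le {a : Perm ι → R} {M : R} (ha : ∀ σ, |a σ| ≤ M) :
    ∑ σ, ((sign σ : ℤ) : R) * a σ ≤ (Fintype.card ι)! * M := by
  rw [← Fintype.card_perm, ← nsmul_eq_mul]
  refine sum_le_card_nsmul univ _ M fun σ _ => ?_
  exact (le_abs_self _).trans ((abs_sign_mul σ _).trans_le (ha σ))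

lemma sub_factorial_sub_one_mul_le_sum_sign_mul {a : Perm ι → R} {M : R}
    (ha : ∀ σ ≠ 1, |a σ| ≤ M) :
    a 1 - ((Fintype.card ι)! - 1) * M ≤ ∑ σ, ((sign σ : ℤ) : R) * a σ := by
  have hcard : (#(univ.erase (1 : Perm ι)) : R) = (Fintype.card ι)! - 1 := by
    rw [cast_card_erase_of_mem (mem_univ _), card_univ, Fintype.card_perm]
  have hrest : -(((Fintype.card ι)! - 1) * M) ≤
      ∑ σ ∈ univ.erase 1, ((sign σ : ℤ) : R) * a σ := by
    rw [← hcard, ← mul_neg, ← nsmul_eq_mul]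
    refine card_nsmul_le_sum _ _ _ fun σ hσ => neg_le_of_abs_le ?_
    exact (abs_sign_mul σ _).trans_le (ha σ (ne_of_mem_erase hσ))
  rw [← add_sum_erase univ _ (mem_univ 1), Perm.sign_one, Units.val_one, Int.cast_one, one_mul]
  linarith

lemma sub_factorial_div_two_mul_le_sum_sign_mul {K : Type*} [Field K] [LinearOrder K]
    [IsStrictOrderedRing K] [Nontrivial ι] {a : Perm ι → K} {c : K}
    (ha₀ : ∀ σ ≠ 1, 0 ≤ a σ) (ha : ∀ σ ≠ 1, a σ ≤ c) :
    a 1 - (Fintype.card ι)! / 2 * c ≤ ∑ σ, ((sign σ : ℤ) : K) * a σ := by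
  have hshift : ∑ σ, ((sign σ : ℤ) : K) * (a σ - c / 2) = ∑ σ, ((sign σ : ℤ) : K) * a σ := by
    simp only [mul_sub, sum_sub_distrib, ← sum_mul, sum_sign_eq_zero, zero_mul, sub_zero]
  have habs : ∀ σ ≠ 1, |a σ - c / 2| ≤ c / 2 := fun σ hσ =>
    abs_le.2 ⟨by linarith [ha₀ σ hσ], by linarith [ha σ hσ]⟩
  linarith [sub_factorial_sub_one_mul_le_sum_sign_mul habs]

end SignedSum

theorem altSum_estimate_large_general {ι : Type*} [Fintype ι] [DecidableEq ι] {lam x : ι → ℝ}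
    (hbig : Pairwise fun i j =>
      Real.log (Fintype.card ι).factorial ≤ (lam i - lam j) * (x i - x j)) :
    (1 / 2) * Real.exp (∑ k, lam k * x k) ≤
      (∑ σ : Equiv.Perm ι, ((Equiv.Perm.sign σ : ℤ) : ℝ) *
        Real.exp (∑ k, lam (σ k) * x k)) ∧
    (∑ σ : Equiv.Perm ι, ((Equiv.Perm.sign σ : ℤ) : ℝ) *
        Real.exp (∑ k, lam (σ k) * x k)) ≤
      ((Fintype.card ι).factorial : ℝ) * Real.exp (∑ k, lam k * x k) := by
  have hmono : Monovary lam x :=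
    monovary_of_pairwise_le_sub_mul_sub (Real.log_natCast_nonneg _) hbig
  have hfac : (0 : ℝ) < (Fintype.card ι).factorial := mod_cast Nat.factorial_pos _
  constructor
  · obtain _ | _ := subsingleton_or_nontrivial ι
    · rw [Fintype.sum_subsingleton _ (1 : Equiv.Perm ι)]
      simp only [Equiv.Perm.sign_one, Equiv.Perm.one_apply, Units.val_one, Int.cast_one, one_mul]
      linarith [Real.exp_pos (∑ k, lam k * x k)]
    · have hterm : ∀ σ : Equiv.Perm ι, σ ≠ 1 → Real.exp (∑ k, lam (σ k) * x k) ≤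
          Real.exp (∑ k, lam k * x k) / (Fintype.card ι).factorial := fun σ hσ => by
        rw [← Real.exp_log hfac, ← Real.exp_sub, Real.exp_le_exp, le_sub_iff_add_le]
        exact sum_comp_perm_mul_add_le_of_ne_one hmono hbig hσ
      refine le_of_eq_of_le ?_
        (sub_factorial_div_two_mul_le_sum_sign_mul (fun σ _ => (Real.exp_pos _).le) hterm)
      simp only [Equiv.Perm.one_apply]
      field_simp
      norm_num
  · refine sum_sign_mul_le fun σ => ?_
    rw [Real.abs_exp, Real.exp_le_exp]
    exact hmono.sum_comp_perm_mul_le_sum_mul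

/-- If `λ, x` are weakly decreasing and `(λ_i−λ_j)(x_i−x_j) ≥ log(n!)` for all `i < j`, then
`(1/2)·e^{⟨λ,x⟩} ≤ ∑_{σ∈Sₙ} sgn(σ)·e^{∑_k λ_{σ(k)} x_k} ≤ n!·e^{⟨λ,x⟩}`. -/
theorem altSum_estimate_large (n : ℕ) (hn : 1 ≤ n) (lam x : Fin n → ℝ)
    (hlam : Antitone lam) (hx : Antitone x)
    (hbig : ∀ i j : Fin n, i < j →
      Real.log (Nat.factorial n) ≤ (lam i - lam j) * (x i - x j)) :
    (1 / 2) * Real.exp (∑ k, lam k * x k) ≤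
      (∑ σ : Equiv.Perm (Fin n), ((Equiv.Perm.sign σ : ℤ) : ℝ) *
        Real.exp (∑ k, lam (σ k) * x k)) ∧
    (∑ σ : Equiv.Perm (Fin n), ((Equiv.Perm.sign σ : ℤ) : ℝ) *
        Real.exp (∑ k, lam (σ k) * x k)) ≤
      (Nat.factorial n : ℝ) * Real.exp (∑ k, lam k * x k) := by
  have hpair : Pairwise fun i j => Real.log n.factorial ≤ (lam i - lam j) * (x i - x j) :=
    fun i j hij => hij.lt_or_gt.elim (hbig i j) fun hji => by linarith [hbig j i hji]
  simpa only [Fintype.card_fin] using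
    altSum_estimate_large_general (lam := lam) (x := x) (by rwa [Fintype.card_fin])
end

section
/- Let n ≥ 2, let σ ∈ Sₙ, let 1 ≤ k ≤ n−1, and let y ∈ ℝⁿ be weakly decreasing. If ∑_{i=1}^k (y_i − y_{σ(i)}) ≠ 0, then ∑_{i=1}^k (y_i − y_{σ(i)}) ≥ y_k − y_{k+1}. (In the root-system language: if the coefficient a_k^w(Y) of the simple root α_k in the decomposition of Y − wY is nonzero for dominant Y, then α_k occurs in a_k^w with a positive integer coefficient, so a_k^w(Y) ≥ α_k(Y).) -/
open Finset

/-!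
Put `s = {1, …, k}`. The coefficient `∑_{i ∈ s} (y_i − y_{σ(i)})` is the sum of `y` over `s` minus
its sum over `σ(s)`. The common part of `s` and `σ(s)` cancels, and what remains pairs the
`d = |s ∖ σ(s)|` indices of `s ∖ σ(s)`, where `y` is at least `y_k`, with the equally many indices
of `σ(s) ∖ s`, where `y` is at most `y_{k+1}`. So the coefficient is at least `d (y_k − y_{k+1})`,
and it vanishes if `d = 0`.
-/

section OrderedAddCommGroup

variable {ι M : Type*} [AddCommGroup M]

theorem sum_sub_comp_eq_sum_sub_sum_image [DecidableEq ι] {s : Finset ι} {f : ι → M} {σ : ι → ι}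
    (hσ : Set.InjOn σ s) :
    ∑ i ∈ s, (f i - f (σ i)) = ∑ i ∈ s, f i - ∑ i ∈ s.image σ, f i := by
  rw [sum_sub_distrib, sum_image hσ]

variable [Preorder M] [IsOrderedAddMonoid M] {s t : Finset ι} {f : ι → M} {a b : M}

theorem card_sdiff_nsmul_sub_le_sum_sub_sum [DecidableEq ι] (hcard : #s = #t)
    (ha : ∀ i ∈ s \ t, a ≤ f i) (hb : ∀ i ∈ t \ s, f i ≤ b) :
    #(s \ t) • (a - b) ≤ ∑ i ∈ s, f i - ∑ i ∈ t, f i :=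
  calc
    #(s \ t) • (a - b) = #(s \ t) • a - #(t \ s) • b := by
      rw [nsmul_sub, card_sdiff_comm hcard]
    _ ≤ ∑ i ∈ s \ t, f i - ∑ i ∈ t \ s, f i :=
      sub_le_sub (card_nsmul_le_sum _ _ _ ha) (sum_le_card_nsmul _ _ _ hb)
    _ = ∑ i ∈ s, f i - ∑ i ∈ t, f i := sum_sdiff_sub_sum_sdiff

theorem sub_le_sum_sub_sum_of_card_eq [DecidableEq ι] (hcard : #s = #t) (hne : s ≠ t)
    (hba : b ≤ a) (ha : ∀ i ∈ s \ t, a ≤ f i) (hb : ∀ i ∈ t \ s, f i ≤ b) :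
    a - b ≤ ∑ i ∈ s, f i - ∑ i ∈ t, f i := by
  have hsdiff : #(s \ t) ≠ 0 := by
    rw [card_ne_zero, sdiff_nonempty]
    exact fun hst ↦ hne (eq_of_subset_of_card_le hst hcard.ge)
  calc
    a - b ≤ #(s \ t) • (a - b) := le_self_nsmul (sub_nonneg.2 hba) hsdiff
    _ ≤ ∑ i ∈ s, f i - ∑ i ∈ t, f i := card_sdiff_nsmul_sub_le_sum_sub_sum hcard ha hb

theorem coeff_ge_simple_root_general [LinearOrder ι] [LocallyFiniteOrderBot ι] {σ : ι → ι}
    {k l : ι} (hkl : k ⋖ l) (hσ : Set.InjOn σ (Iic k)) {y : ι → M} (hy : Antitone y)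
    (hne : ∑ i ∈ Iic k, (y i - y (σ i)) ≠ 0) :
    y k - y l ≤ ∑ i ∈ Iic k, (y i - y (σ i)) := by
  rw [sum_sub_comp_eq_sum_sub_sum_image hσ] at hne ⊢
  have himage : Iic k ≠ (Iic k).image σ := fun h ↦ hne (by rw [← h, sub_self])
  have hlower : ∀ i ∈ Iic k \ (Iic k).image σ, y k ≤ y i := fun i hi ↦
    hy (mem_Iic.1 (mem_sdiff.1 hi).1)
  have hupper : ∀ i ∈ (Iic k).image σ \ Iic k, y i ≤ y l := fun i hi ↦ by
    have hki : k < i := not_le.1 (mt mem_Iic.2 (mem_sdiff.1 hi).2)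
    exact hy (hkl.ge_of_gt hki)
  exact sub_le_sum_sub_sum_of_card_eq (card_image_of_injOn hσ).symm himage (hy hkl.le)
    hlower hupper

end OrderedAddCommGroup

theorem filter_val_lt_eq_Iic_pred {n k : ℕ} (hk : 1 ≤ k) (hkn : k ≤ n) :
    ({i | (i : ℕ) < k} : Finset (Fin n)) = Iic ⟨k - 1, by omega⟩ := by
  ext i
  simp only [mem_filter_univ, mem_Iic, Fin.le_def]
  omega

theorem mk_pred_covBy_mk {n k : ℕ} (hk : 1 ≤ k) (hkn : k < n) :
    (⟨k - 1, by omega⟩ : Fin n) ⋖ ⟨k, hkn⟩ :=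
  Fin.covBy_iff.2 (Nat.covBy_iff_add_one_eq.2 (Nat.sub_add_cancel hk))

/-- For `n = m + 2 ≥ 2`, `σ ∈ Sₙ`, `1 ≤ k ≤ n − 1` and weakly decreasing `y ∈ ℝⁿ`: if the
coefficient `∑_{i=1}^k (y_i − y_{σ(i)})` of the simple root `α_k` in `y − σ·y` is nonzero,
then it is at least `α_k(y) = y_k − y_{k+1}`. -/
theorem coeff_ge_simple_root (m : ℕ) (σ : Equiv.Perm (Fin (m + 2)))
    (k : ℕ) (hk1 : 1 ≤ k) (hk2 : k ≤ m + 1)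
    (y : Fin (m + 2) → ℝ) (hy : Antitone y)
    (hne : ∑ i ∈ Finset.univ.filter (fun i : Fin (m + 2) => (i : ℕ) < k),
      (y i - y (σ i)) ≠ 0) :
    y ⟨k - 1, by omega⟩ - y ⟨k, by omega⟩ ≤
      ∑ i ∈ Finset.univ.filter (fun i : Fin (m + 2) => (i : ℕ) < k), (y i - y (σ i)) := by
  rw [filter_val_lt_eq_Iic_pred hk1 (by omega)] at hne ⊢
  exact coeff_ge_simple_root_general (mk_pred_covBy_mk hk1 (by omega)) σ.injective.injOn hy hne
end

section
/- Let n ≥ 2, let σ ∈ Sₙ with σ ≠ id, and let λ, x ∈ ℝⁿ be weakly decreasing. Then there exists k with 1 ≤ k ≤ n−1 such that ∑_{i=1}^n λ_i x_i − ∑_{i=1}^n λ_{σ(i)} x_i ≥ (λ_k − λ_{k+1})·(x_k − x_{k+1}). -/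
open Finset

/-!
If `σ` is not the identity, there are indices `i < j` with `σ j ≤ i < σ i`. Exchanging the values of
`σ` at `i` and `j` raises `∑ p, f (σ p) • g p` by `(f (σ j) - f (σ i)) • (g i - g j)`, and by the
rearrangement inequality the raised sum is still at most `∑ p, f p • g p`. Each of the intervals
`[σ j, σ i]` and `[i, j]` contains `i` together with its successor, so each factor is at least the
corresponding gap at `i`.
-/

section Displacement

variable {ι : Type*} [LinearOrder ι] {f : ι → ι}

lemma exists_lt_apply_of_injective_of_ne_id [WellFoundedLT ι] (hf : f.Injective) (hne : f ≠ id) :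
    ∃ i, i < f i := by
  by_contra! hle
  refine hne (funext fun i => ?_)
  induction i using WellFoundedLT.induction with
  | ind i ih => exact (hle i).eq_or_lt.resolve_right fun hlt => hlt.ne (hf (ih _ hlt))

lemma exists_gt_apply_le_of_lt_apply {i : ι} (hfin : (Set.Ici i).Finite)
    (hinj : Set.InjOn f (Set.Ici i)) (hi : i < f i) : ∃ j, i < j ∧ f j ≤ i := by
  by_contra! hgt
  have hlt_apply : ∀ j, i ≤ j → i < f j := fun j hij =>
    hij.eq_or_lt.elim (fun heq => heq ▸ hi) (hgt j)
  have hmaps : Set.MapsTo f (Set.Ici i) (Set.Ici i) := fun j hij => (hlt_apply j hij).le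
  obtain ⟨j, hij, hj⟩ := ((hfin.injOn_iff_bijOn_of_mapsTo hmaps).1 hinj).surjOn Set.self_mem_Ici
  exact (hlt_apply j hij).ne' hj

end Displacement

lemma sum_swap_smul_sub_sum_smul {ι R M : Type*} [Fintype ι] [DecidableEq ι] [Ring R]
    [AddCommGroup M] [Module R M] (f : ι → R) (g : ι → M) (i j : ι) :
    ∑ p, f (Equiv.swap i j p) • g p - ∑ p, f p • g p = (f j - f i) • (g i - g j) := by
  obtain rfl | hij := eq_or_ne i j
  · simp
  rw [← sum_sub_distrib, Fintype.sum_eq_add i j hij]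
  · rw [Equiv.swap_apply_left, Equiv.swap_apply_right]
    simp only [sub_smul, smul_sub]
    abel
  · rintro p ⟨hpi, hpj⟩
    rw [Equiv.swap_apply_of_ne_of_ne hpi hpj, sub_self]

section Rearrangement

variable {ι R M : Type*} [Fintype ι] [Ring R] [LinearOrder R] [IsStrictOrderedRing R]
  [AddCommGroup M] [LinearOrder M] [IsOrderedAddMonoid M] [Module R M]
  {f : ι → R} {g : ι → M}

lemma smul_sub_le_sum_smul_sub_sum_comp_perm_smul [PosSMulMono R M] (hfg : Monovary f g)
    (σ : Equiv.Perm ι) (i j : ι) :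
    (f (σ j) - f (σ i)) • (g i - g j) ≤ ∑ p, f p • g p - ∑ p, f (σ p) • g p := by
  classical
  rw [← sum_swap_smul_sub_sum_smul (fun p => f (σ p)) g i j]
  exact sub_le_sub_right (hfg.sum_comp_perm_smul_le_sum_smul (σ := σ * Equiv.swap i j)) _

theorem gap_ge_simple_root_product_general [LinearOrder ι] [IsOrderedModule R M]
    {σ : Equiv.Perm ι} (hσ : σ ≠ 1) (hf : Antitone f) (hg : Antitone g) :
    ∃ i k, i ⋖ k ∧ (f i - f k) • (g i - g k) ≤ ∑ p, f p • g p - ∑ p, f (σ p) • g p := by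
  obtain ⟨i, hi⟩ := exists_lt_apply_of_injective_of_ne_id σ.injective
    fun h => hσ (DFunLike.coe_injective h)
  obtain ⟨j, hij, hj⟩ :=
    exists_gt_apply_le_of_lt_apply (Set.toFinite _) σ.injective.injOn hi
  obtain ⟨k, hik⟩ := exists_covBy_of_wellFoundedLT hij.not_isMax
  have hf_gap : f i - f k ≤ f (σ j) - f (σ i) := sub_le_sub (hf hj) (hf (hik.ge_of_gt hi))
  have hg_gap : g i - g k ≤ g i - g j := sub_le_sub_left (hg (hik.ge_of_gt hij)) _
  refine ⟨i, k, hik, ?_⟩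
  calc (f i - f k) • (g i - g k)
      ≤ (f (σ j) - f (σ i)) • (g i - g j) :=
        smul_le_smul hf_gap hg_gap (sub_nonneg.2 (hf hik.le)) (sub_nonneg.2 (hg hij.le))
    _ ≤ ∑ p, f p • g p - ∑ p, f (σ p) • g p :=
        smul_sub_le_sum_smul_sub_sum_comp_perm_smul (hf.monovary hg) σ i j

end Rearrangement

lemma exists_castSucc_eq_and_succ_eq_of_covBy {n : ℕ} {i j : Fin (n + 1)} (hij : i ⋖ j) :
    ∃ k : Fin n, k.castSucc = i ∧ k.succ = j := by
  obtain ⟨k, rfl⟩ := Fin.exists_castSucc_eq.2 (Fin.ne_last_of_lt hij.lt)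
  exact ⟨k, rfl, (Fin.castSucc_lt_iff_succ_le.1 hij.lt).antisymm
    (hij.ge_of_gt Fin.castSucc_lt_succ)⟩

/-- For `n = m + 2 ≥ 2`, a non-identity permutation `σ ∈ Sₙ` and weakly decreasing
`λ, x ∈ ℝⁿ`, there is `k` with `1 ≤ k ≤ n−1` such that
`⟨λ,x⟩ − ⟨σ·λ,x⟩ ≥ (λ_k − λ_{k+1})(x_k − x_{k+1})`. -/
theorem gap_ge_simple_root_product (m : ℕ) (σ : Equiv.Perm (Fin (m + 2))) (hσ : σ ≠ 1)
    (lam x : Fin (m + 2) → ℝ) (hlam : Antitone lam) (hx : Antitone x) :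
    ∃ k : Fin (m + 1),
      (lam k.castSucc - lam k.succ) * (x k.castSucc - x k.succ) ≤
        (∑ i, lam i * x i) - ∑ i, lam (σ i) * x i := by
  obtain ⟨_, _, hcov, hle⟩ := gap_ge_simple_root_product_general hσ hlam hx
  obtain ⟨k, rfl, rfl⟩ := exists_castSucc_eq_and_succ_eq_of_covBy hcov
  exact ⟨k, hle⟩
end

section
/- Let n ≥ 2 and let λ, x ∈ ℝⁿ be weakly decreasing and satisfy (λ_i−λ_j)(x_i−x_j) ≥ log(n!) for all 1 ≤ i < j ≤ n. Then for every permutation σ ∈ Sₙ with σ ≠ id one has exp(∑_{k=1}^n λ_{σ(k)} x_k) ≤ (1/n!)·exp(∑_{k=1}^n λ_k x_k). -/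
open Finset

/-!
A nontrivial permutation `σ` has a largest moved point `m`, with `σ m < m` and `σ⁻¹ m < m`.
Exchanging the values of `σ` at `m` and `σ⁻¹ m` changes `∑ k, f (σ k) * g k` by exactly
`(f (σ m) - f m) * (g (σ⁻¹ m) - g m)`. For antitone `f` and `g` this gain is at least
`(f q - f m) * (g q - g m)` with `q = max (σ m) (σ⁻¹ m) < m`, hence at least the constant bounding
all such products, and the rearrangement inequality bounds the sum after the exchange by
`∑ k, f k * g k`. When the indices carry no order and all these products are nonnegative,
`f` and `g` vary together, so both are antitone for a suitable linear order.
-/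

lemma exists_apply_lt_and_symm_apply_lt {ι : Type*} [LinearOrder ι] [WellFoundedGT ι]
    {σ : Equiv.Perm ι} (hσ : σ ≠ 1) : ∃ m, σ m < m ∧ σ.symm m < m := by
  obtain ⟨m, hm⟩ := exists_maximal_of_wellFoundedGT (fun k ↦ σ k ≠ k) (DFunLike.ne_iff.mp hσ)
  have lt_of_moved {k : ι} (hk : σ k ≠ k) (hkm : k ≠ m) : k < m :=
    (not_lt.mp (hm.not_gt hk)).lt_of_ne hkm
  have hsymm : σ.symm m ≠ m := fun h ↦ hm.prop (σ.symm_apply_eq.mp h).symm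
  refine ⟨m, lt_of_moved (σ.injective.ne hm.prop) hm.prop, lt_of_moved ?_ hsymm⟩
  rwa [σ.apply_symm_apply, ne_comm]

lemma sum_comp_swap_smul {ι R M : Type*} [Fintype ι] [DecidableEq ι] [Ring R] [AddCommGroup M]
    [Module R M] (f : ι → R) (g : ι → M) (i j : ι) :
    ∑ k, f (Equiv.swap i j k) • g k = ∑ k, f k • g k + (f j - f i) • (g i - g j) := by
  rcases eq_or_ne i j with rfl | hij
  · simp
  rw [← sub_eq_iff_eq_add', ← sum_sub_distrib, Fintype.sum_eq_add i j hij]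
  · rw [Equiv.swap_apply_left, Equiv.swap_apply_right]
    simp only [sub_smul, smul_sub]
    abel
  · rintro k ⟨hki, hkj⟩
    rw [Equiv.swap_apply_of_ne_of_ne hki hkj, sub_self]

section Rearrangement

variable {ι R M : Type*} [Ring R] [LinearOrder R] [IsStrictOrderedRing R]
  [AddCommGroup M] [LinearOrder M] [IsOrderedAddMonoid M] [Module R M] [PosSMulMono R M]
  {f : ι → R} {g : ι → M} {c : M}

lemma le_sub_smul_sub_of_antitone [LinearOrder ι] (hf : Antitone f) (hg : Antitone g)
    (hc : ∀ i j, i < j → c ≤ (f i - f j) • (g i - g j)) {i j m : ι} (hi : i < m) (hj : j < m) :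
    c ≤ (f i - f m) • (g j - g m) := by
  have hq : max i j < m := max_lt hi hj
  calc
    c ≤ (f (max i j) - f m) • (g (max i j) - g m) := hc _ _ hq
    _ ≤ (f i - f m) • (g j - g m) :=
      smul_le_smul (sub_le_sub_right (hf (le_max_left i j)) _)
        (sub_le_sub_right (hg (le_max_right i j)) _)
        (sub_nonneg.mpr (hf hq.le)) (sub_nonneg.mpr (hg hj.le))

variable [Fintype ι] {σ : Equiv.Perm ι}

lemma add_sum_comp_perm_smul_le_sum_smul_of_antitone [LinearOrder ι] (hf : Antitone f)
    (hg : Antitone g) (hc : ∀ i j, i < j → c ≤ (f i - f j) • (g i - g j)) (hσ : σ ≠ 1) :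
    c + ∑ k, f (σ k) • g k ≤ ∑ k, f k • g k := by
  obtain ⟨m, hm, hm'⟩ := exists_apply_lt_and_symm_apply_lt hσ
  calc
    c + ∑ k, f (σ k) • g k
      ≤ (f (σ m) - f m) • (g (σ.symm m) - g m) + ∑ k, f (σ k) • g k := by
        gcongr
        exact le_sub_smul_sub_of_antitone hf hg hc hm hm'
    _ = ∑ k, f ((σ * Equiv.swap (σ.symm m) m) k) • g k := by
        simpa only [Function.comp_apply, Equiv.Perm.mul_apply, σ.apply_symm_apply, add_comm] using
          (sum_comp_swap_smul (f ∘ σ) g (σ.symm m) m).symm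
    _ ≤ ∑ k, f k • g k := (hf.monovary hg).sum_comp_perm_smul_le_sum_smul

lemma add_sum_comp_perm_smul_le_sum_smul (hfg : Monovary f g)
    (hc : Pairwise fun i j ↦ c ≤ (f i - f j) • (g i - g j)) (hσ : σ ≠ 1) :
    c + ∑ k, f (σ k) • g k ≤ ∑ k, f k • g k := by
  obtain ⟨_, hf, hg⟩ := monovary_iff_exists_antitone.mp hfg
  exact add_sum_comp_perm_smul_le_sum_smul_of_antitone hf hg (fun _ _ hij ↦ hc hij.ne) hσ

end Rearrangement

lemma monovary_of_pairwise_nonneg {ι R : Type*} [Ring R] [LinearOrder R] [IsStrictOrderedRing R]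
    {f g : ι → R} (h : Pairwise fun i j ↦ 0 ≤ (f i - f j) * (g i - g j)) : Monovary f g := by
  refine monovary_iff_forall_mul_nonneg.mpr fun i j ↦ ?_
  rcases eq_or_ne j i with rfl | hji
  · simp
  · exact h hji

theorem exp_perm_le_general {ι : Type*} [Fintype ι] {C : ℝ} (hC : 1 ≤ C) {lam x : ι → ℝ}
    (hbig : Pairwise fun i j ↦ Real.log C ≤ (lam i - lam j) * (x i - x j))
    {σ : Equiv.Perm ι} (hσ : σ ≠ 1) :
    Real.exp (∑ k, lam (σ k) * x k) ≤ (1 / C) * Real.exp (∑ k, lam k * x k) := by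
  have hpos : 0 < C := zero_lt_one.trans_le hC
  have hmono : Monovary lam x :=
    monovary_of_pairwise_nonneg fun _ _ hij ↦ (Real.log_nonneg hC).trans (hbig hij)
  have hsum : Real.log C + ∑ k, lam (σ k) * x k ≤ ∑ k, lam k * x k :=
    add_sum_comp_perm_smul_le_sum_smul hmono hbig hσ
  rw [one_div, le_inv_mul_iff₀ hpos]
  calc
    C * Real.exp (∑ k, lam (σ k) * x k)
      = Real.exp (Real.log C + ∑ k, lam (σ k) * x k) := by rw [Real.exp_add, Real.exp_log hpos]
    _ ≤ Real.exp (∑ k, lam k * x k) := Real.exp_le_exp.mpr hsum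

/-- If `λ, x ∈ ℝⁿ` (`n ≥ 2`) are weakly decreasing and `(λ_i−λ_j)(x_i−x_j) ≥ log(n!)` for
all `i < j`, then for every permutation `σ ≠ id`,
`exp(∑ λ_{σ(k)} x_k) ≤ (1/n!)·exp(∑ λ_k x_k)`. -/
theorem exp_perm_le (n : ℕ) (hn : 2 ≤ n) (lam x : Fin n → ℝ)
    (hlam : Antitone lam) (hx : Antitone x)
    (hbig : ∀ i j : Fin n, i < j →
      Real.log (Nat.factorial n) ≤ (lam i - lam j) * (x i - x j))
    (σ : Equiv.Perm (Fin n)) (hσ : σ ≠ 1) :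
    Real.exp (∑ k, lam (σ k) * x k) ≤
      (1 / (Nat.factorial n : ℝ)) * Real.exp (∑ k, lam k * x k) := by
  have : Std.Symm fun i j ↦ Real.log (Nat.factorial n) ≤ (lam i - lam j) * (x i - x j) :=
    ⟨fun i j h ↦ by rwa [← neg_sub (lam i), ← neg_sub (x i), neg_mul_neg]⟩
  exact exp_perm_le_general (Nat.one_le_cast.mpr n.factorial_pos) (pairwise_iff_lt.mpr hbig) hσ
end
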